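/- arXiv:1312.2370 — 11 statements merged into one kernel-verified Lean document; each statement's English description precedes it below -/
import Mathlib

section
/- The difference equation n = x_n (x_{n+1} + x_n + x_{n-1}) for all n ≥ 1, with initial value x_0 = 0, has exactly one solution (x_n)_{n≥1} with x_n > 0 for all n ≥ 1, and this solution has x_1 = 2 Γ(3/4)/Γ(1/4). -/
/-!
Uniqueness is a convexity argument. A positive solution satisfies `x n ^ 2 ≤ n`. For two positive
solutions `x`, `y` the signed difference `e n = (-1) ^ n * (x n - y n)` satisfies
`e (n + 1) - 2 * e n + e (n - 1) = (n / (x n * y n) - 1) * e n`, with nonnegative factor, and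
`e 0 = 0`. If `e 1 > 0`, then `e` is convex, so `e n ≥ n * e 1`, which contradicts `|e n| ≤ √n`.
Hence `x 1 = y 1`, and the recurrence determines everything else.

Existence comes from orthogonal polynomials for the weight `exp (-x ^ 4 / 4)`. Its monic orthogonal
polynomials satisfy `X * P n = P (n + 1) + a n * P (n - 1)` with `a n = h n / h (n - 1)` and
`h n = ∫ P n ^ 2 exp (-x ^ 4 / 4) > 0`. Integrating the derivative of
`P (n + 1) * P n * exp (-x ^ 4 / 4)` gives
`(n + 1) * h n = h (n + 1) * (a (n + 2) + a (n + 1) + a n)`, so `a` is a positive solution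
(`freudCoeff_eq`). Finally `a 1` is a quotient of two moments of the weight, which are values of
the Gamma function (`freudCoeff_one`).
-/

open Polynomial MeasureTheory

/-! ### The weight `exp (-x ^ 4 / 4)` and its moment functional -/

lemma integrable_pow_mul_quartic (n : ℕ) :
    Integrable (fun x : ℝ => x ^ n * Real.exp (-(1 / 4) * x ^ 4)) := by
  have h := integrable_rpow_mul_exp_neg_mul_sq (b := 1 / 2) (by norm_num) (s := n)
    (by have : (0 : ℝ) ≤ n := n.cast_nonneg
        linarith)
  refine Integrable.mono' (h.norm.const_mul (Real.exp (1 / 4)))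
    (by fun_prop) (Filter.Eventually.of_forall fun x => ?_)
  -- `x ^ 4 / 4 ≥ x ^ 2 / 2 - 1 / 4` gives a Gaussian majorant
  have h2 : Real.exp (-(1 / 4) * x ^ 4) ≤ Real.exp (1 / 4) * Real.exp (-(1 / 2) * x ^ 2) := by
    rw [← Real.exp_add]
    exact Real.exp_le_exp.2 (by nlinarith [sq_nonneg (x ^ 2 - 1)])
  simp only [norm_mul, Real.rpow_natCast, Real.norm_eq_abs, Real.abs_exp]
  calc _ ≤ |x ^ n| * (Real.exp (1 / 4) * Real.exp (-(1 / 2) * x ^ 2)) := by gcongr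
    _ = _ := by ring

lemma integrable_eval_mul_quartic (p : ℝ[X]) :
    Integrable (fun x : ℝ => p.eval x * Real.exp (-(1 / 4) * x ^ 4)) := by
  induction p using Polynomial.induction_on' with
  | add p q hp hq =>
    simp only [eval_add, add_mul]
    exact hp.add hq
  | monomial n a => simpa [mul_assoc] using (integrable_pow_mul_quartic n).const_mul a

/-- The linear functional `p ↦ ∫ p(x) exp (-x ^ 4 / 4) dx` on real polynomials. -/
noncomputable def freudL : ℝ[X] →ₗ[ℝ] ℝ where
  toFun p := ∫ x : ℝ, p.eval x * Real.exp (-(1 / 4) * x ^ 4)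
  map_add' p q := by
    simp only [eval_add, add_mul]
    exact integral_add (integrable_eval_mul_quartic p) (integrable_eval_mul_quartic q)
  map_smul' a p := by
    simp [mul_assoc, integral_const_mul]

lemma freudL_apply (p : ℝ[X]) :
    freudL p = ∫ x : ℝ, p.eval x * Real.exp (-(1 / 4) * x ^ 4) := rfl

lemma freudL_C_mul (a : ℝ) (p : ℝ[X]) : freudL (C a * p) = a * freudL p := by
  rw [← smul_eq_C_mul, map_smul, smul_eq_mul]

lemma freudL_sq_pos {p : ℝ[X]} (hp : p ≠ 0) : 0 < freudL (p * p) := by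
  obtain ⟨x, hx⟩ : ∃ x, p.eval x ≠ 0 := by
    by_contra! h
    exact hp (Polynomial.funext (by simpa using h))
  rw [freudL_apply]
  refine integral_pos_of_integrable_nonneg_nonzero (x := x) (by fun_prop)
    (integrable_eval_mul_quartic _) (fun y => ?_) ?_
  · simp only [eval_mul, Pi.zero_apply]
    have := mul_self_nonneg (p.eval y)
    positivity
  · simp [hx, Real.exp_ne_zero]

lemma freudL_odd {p : ℝ[X]} (hp : ∀ x, p.eval (-x) = -p.eval x) : freudL p = 0 := by
  have h := integral_neg_eq_self (fun x : ℝ => p.eval x * Real.exp (-(1 / 4) * x ^ 4)) volume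
  have h4 : ∀ x : ℝ, (-x) ^ 4 = x ^ 4 := fun x => by ring
  simp only [hp, h4, neg_mul, integral_neg] at h
  rw [freudL_apply]
  simp only [neg_mul]
  linarith

/-- Integration by parts against the weight. -/
lemma freudL_derivative (p : ℝ[X]) : freudL (derivative p) = freudL (X ^ 3 * p) := by
  have h : ∀ x : ℝ, HasDerivAt (fun x => p.eval x * Real.exp (-(1 / 4) * x ^ 4))
      ((derivative p - X ^ 3 * p).eval x * Real.exp (-(1 / 4) * x ^ 4)) x := by
    intro x
    have h1 : HasDerivAt (fun x : ℝ => -(1 / 4) * x ^ 4) (-x ^ 3) x := by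
      have := (hasDerivAt_pow 4 x).const_mul (-(1 / 4) : ℝ)
      exact this.congr_deriv (by norm_num; ring)
    refine ((p.hasDerivAt x).mul h1.exp).congr_deriv ?_
    simp only [eval_sub, eval_mul, eval_pow, eval_X]
    ring
  have := integral_eq_zero_of_hasDerivAt_of_integrable h (integrable_eval_mul_quartic _)
    (integrable_eval_mul_quartic _)
  rw [← freudL_apply, map_sub] at this
  linarith

lemma freudL_X_pow_even (k : ℕ) (hk : Even k) :
    freudL (X ^ k) = 2 * ((1 / 4 : ℝ) ^ (-((k : ℝ) + 1) / 4) * (1 / 4)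
      * Real.Gamma (((k : ℝ) + 1) / 4)) := by
  have h := integral_rpow_mul_exp_neg_mul_rpow (p := 4) (q := k) (b := 1 / 4) (by norm_num)
    (by have : (0 : ℝ) ≤ k := k.cast_nonneg
        linarith) (by norm_num)
  have h' := integral_comp_abs (f := fun x : ℝ => x ^ k * Real.exp (-(1 / 4) * x ^ 4))
  rw [freudL_apply, ← h]
  simp only [hk.pow_abs, (by decide : Even 4).pow_abs] at h'
  simp only [eval_pow, eval_X]
  rw [h']
  congr 1
  refine setIntegral_congr_fun measurableSet_Ioi fun x _ => ?_
  have h4 : x ^ (4 : ℝ) = x ^ 4 := by exact_mod_cast Real.rpow_natCast x 4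
  simp only [h4, Real.rpow_natCast]

/-! ### Orthogonal polynomials -/

/-- The monic orthogonal polynomials for the weight `exp (-x ^ 4 / 4)`, defined by their three-term
recurrence; the linear term is absent because the weight is even. -/
noncomputable def freudP : ℕ → ℝ[X]
  | 0 => 1
  | 1 => X
  | n + 2 => X * freudP (n + 1) -
      C (freudL (freudP (n + 1) * freudP (n + 1)) / freudL (freudP n * freudP n)) * freudP n

/-- The squared norm of the `n`-th orthogonal polynomial. -/
noncomputable def freudH (n : ℕ) : ℝ := freudL (freudP n * freudP n)

/-- The recurrence coefficients `h n / h (n - 1)`, with value `0` at `n = 0`. -/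
noncomputable def freudCoeff : ℕ → ℝ
  | 0 => 0
  | n + 1 => freudH (n + 1) / freudH n

/-- At `m = 0` the term `freudP (m - 1)` is multiplied by `freudCoeff 0 = 0`. -/
lemma X_mul_freudP (m : ℕ) :
    X * freudP m = freudP (m + 1) + C (freudCoeff m) * freudP (m - 1) := by
  cases m with
  | zero => simp [freudP, freudCoeff]
  | succ m => simp [freudP, freudCoeff, freudH]

lemma freudP_monic_natDegree (n : ℕ) : (freudP n).Monic ∧ (freudP n).natDegree = n := by
  induction n using Nat.twoStepInduction with
  | zero => simp [freudP]
  | one => simp [freudP, monic_X]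
  | more n h0 h1 =>
    have hm : (X * freudP (n + 1)).Monic := monic_X.mul h1.1
    have hd : (X * freudP (n + 1)).natDegree = n + 2 := by
      rw [monic_X.natDegree_mul h1.1, h1.2, natDegree_X]
      ring
    have hlt : (C (freudL (freudP (n + 1) * freudP (n + 1)) / freudL (freudP n * freudP n))
        * freudP n).natDegree < (X * freudP (n + 1)).natDegree := by
      refine lt_of_le_of_lt (natDegree_C_mul_le _ _) ?_
      rw [h0.2, hd]
      omega
    rw [freudP]
    refine ⟨hm.sub_of_left (degree_lt_degree hlt), ?_⟩
    rw [natDegree_sub_eq_left_of_natDegree_lt hlt, hd]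

lemma freudH_pos (n : ℕ) : 0 < freudH n :=
  freudL_sq_pos (freudP_monic_natDegree n).1.ne_zero

lemma freudCoeff_mul (n : ℕ) : freudCoeff (n + 1) * freudH n = freudH (n + 1) :=
  div_mul_cancel₀ _ (freudH_pos n).ne'

lemma freudP_eval_neg (n : ℕ) (x : ℝ) : (freudP n).eval (-x) = (-1) ^ n * (freudP n).eval x := by
  induction n using Nat.twoStepInduction with
  | zero => simp [freudP]
  | one => simp [freudP]
  | more n h0 h1 =>
    simp only [freudP, eval_sub, eval_mul, eval_X, eval_C, h0, h1]
    ring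

lemma freudL_X_mul_sq (n : ℕ) : freudL (X * (freudP n * freudP n)) = 0 := by
  refine freudL_odd fun x => ?_
  have : ((-1 : ℝ) ^ n) * (-1) ^ n = 1 := by rw [← mul_pow]; simp
  simp only [eval_mul, eval_X, freudP_eval_neg]
  linear_combination (-x * eval x (freudP n) ^ 2) * this

lemma freudP_orthogonal (n : ℕ) : ∀ m < n, freudL (freudP n * freudP m) = 0 := by
  induction n using Nat.twoStepInduction with
  | zero => simp
  | one =>
    intro m hm
    obtain rfl : m = 0 := by omega
    simpa [freudP] using freudL_X_mul_sq 0
  | more n h0 h1 =>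
    intro m hm
    have key : freudP (n + 2) * freudP m =
        freudP (n + 1) * (X * freudP m) - C (freudCoeff (n + 1)) * (freudP n * freudP m) := by
      have := X_mul_freudP (n + 1)
      simp only [Nat.add_sub_cancel] at this
      linear_combination (-freudP m) * this
    rw [key, map_sub, freudL_C_mul]
    rcases (by omega : m = n + 1 ∨ m = n ∨ m < n) with rfl | rfl | hlt
    · rw [show freudP (n + 1) * (X * freudP (n + 1)) = X * (freudP (n + 1) * freudP (n + 1)) by
        ring, freudL_X_mul_sq, mul_comm (freudP n), h1 n (by omega)]
      simp
    · rw [X_mul_freudP, mul_add, map_add, mul_left_comm, freudL_C_mul, h1 (m - 1) (by omega)]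
      have := freudCoeff_mul m
      unfold freudH at this
      linarith
    · rw [X_mul_freudP, mul_add, map_add, mul_left_comm, freudL_C_mul, h1 (m - 1) (by omega),
        h1 (m + 1) (by omega), h0 m hlt]
      simp

lemma freudL_freudP_mul_X_pow_mul (n k : ℕ) :
    ∀ m, k + m < n → freudL (freudP n * (X ^ k * freudP m)) = 0 := by
  induction k with
  | zero => intro m hm; simpa using freudP_orthogonal n m (by omega)
  | succ k ih =>
    intro m hm
    have : freudP n * (X ^ (k + 1) * freudP m) = freudP n * (X ^ k * freudP (m + 1))
        + C (freudCoeff m) * (freudP n * (X ^ k * freudP (m - 1))) := by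
      linear_combination (freudP n * X ^ k) * X_mul_freudP m
    rw [this, map_add, freudL_C_mul, ih _ (by omega), ih _ (by omega)]
    simp

lemma freudL_freudP_mul_of_degree_lt {n : ℕ} {q : ℝ[X]} (hq : q.degree < n) :
    freudL (freudP n * q) = 0 := by
  rw [q.as_sum_range_C_mul_X_pow, Finset.mul_sum, map_sum]
  refine Finset.sum_eq_zero fun k hk => ?_
  rw [mul_left_comm, freudL_C_mul]
  by_cases hkn : k < n
  · have := freudL_freudP_mul_X_pow_mul n k 0 (by omega)
    simp only [freudP, mul_one] at this
    simp [this]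
  · rw [coeff_eq_zero_of_degree_lt (lt_of_lt_of_le hq (by exact_mod_cast not_lt.1 hkn)), zero_mul]

/-! ### The difference equation for the recurrence coefficients -/

lemma freudL_derivative_mul (n : ℕ) :
    freudL (freudP n * derivative (freudP (n + 1))) = (n + 1) * freudH n := by
  obtain ⟨hm, hd⟩ := freudP_monic_natDegree (n + 1)
  obtain ⟨hm', hd'⟩ := freudP_monic_natDegree n
  -- `derivative (freudP (n + 1))` and `(n + 1) * freudP n` have the same leading term
  have hdeg : (derivative (freudP (n + 1)) - C ((n : ℝ) + 1) * freudP n).degree < n := by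
    rw [degree_lt_iff_coeff_zero]
    intro k hk
    rw [coeff_sub, coeff_derivative, coeff_C_mul]
    rcases hk.eq_or_lt with rfl | hlt
    · have h1 := hm.coeff_natDegree
      have h2 := hm'.coeff_natDegree
      rw [hd] at h1
      rw [hd'] at h2
      rw [h1, h2]
      ring
    · rw [coeff_eq_zero_of_natDegree_lt (by omega), coeff_eq_zero_of_natDegree_lt (by omega)]
      ring
  have h := freudL_freudP_mul_of_degree_lt hdeg
  rw [mul_sub, map_sub, mul_left_comm, freudL_C_mul] at h
  rw [freudH]
  linarith

lemma freudL_mul_derivative (n : ℕ) :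
    freudL (freudP (n + 1) * derivative (freudP n)) = 0 := by
  obtain ⟨hm, hd⟩ := freudP_monic_natDegree n
  refine freudL_freudP_mul_of_degree_lt (lt_of_le_of_lt (degree_derivative_le) ?_)
  rw [degree_eq_natDegree hm.ne_zero, hd]
  exact_mod_cast n.lt_succ_self

lemma freudL_X_cube_mul (n : ℕ) : freudL (X ^ 3 * (freudP (n + 1) * freudP n)) =
    freudH (n + 1) * (freudCoeff (n + 2) + freudCoeff (n + 1) + freudCoeff n) := by
  have e1 := X_mul_freudP n
  have e2 := X_mul_freudP (n + 1)
  have e3 := X_mul_freudP (n + 2)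
  simp only [Nat.add_sub_cancel, show n + 2 - 1 = n + 1 by omega, add_assoc, Nat.reduceAdd]
    at e2 e3
  -- expand `X ^ 2 * P (n + 1)` and `X * P n` in the orthogonal basis
  have expand : X ^ 3 * (freudP (n + 1) * freudP n) =
      freudP (n + 3) * freudP (n + 1)
      + C (freudCoeff n) * (freudP (n + 3) * freudP (n - 1))
      + C (freudCoeff (n + 2) + freudCoeff (n + 1)) * (freudP (n + 1) * freudP (n + 1))
      + C ((freudCoeff (n + 2) + freudCoeff (n + 1)) * freudCoeff n)
        * (freudP (n + 1) * freudP (n - 1))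
      + C (freudCoeff (n + 1)) * (C (freudCoeff n) * (freudP (n - 1) * (X * freudP n)) ) := by
    simp only [C_add, C_mul]
    linear_combination (X ^ 2 * freudP (n + 1)) * e1
      + (X * (freudP (n + 1) + C (freudCoeff n) * freudP (n - 1))) * e2
      + (freudP (n + 1) + C (freudCoeff n) * freudP (n - 1)) * e3
      + C (freudCoeff (n + 1)) * freudP (n + 1) * e1
  have hlast : freudCoeff n * freudL (freudP (n - 1) * (X * freudP n))
      = freudCoeff n * freudH n := by
    cases n with
    | zero => simp [freudCoeff]
    | succ k =>
      have := X_mul_freudP k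
      rw [Nat.add_sub_cancel, mul_left_comm, ← mul_assoc, this, add_mul, map_add, mul_assoc,
        freudL_C_mul, freudH, mul_comm (freudP (k - 1)), freudP_orthogonal (k + 1) (k - 1)
        (by omega)]
      simp
  rw [expand]
  simp only [map_add freudL, freudL_C_mul]
  rw [freudP_orthogonal (n + 3) (n + 1) (by omega), freudP_orthogonal (n + 3) (n - 1) (by omega),
    freudP_orthogonal (n + 1) (n - 1) (by omega), hlast]
  have := freudCoeff_mul n
  have hH : freudL (freudP (n + 1) * freudP (n + 1)) = freudH (n + 1) := rfl
  rw [hH]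
  linear_combination freudCoeff n * this

lemma freudCoeff_eq (n : ℕ) : ((n : ℝ) + 1) =
    freudCoeff (n + 1) * (freudCoeff (n + 2) + freudCoeff (n + 1) + freudCoeff n) := by
  have h := freudL_derivative (freudP (n + 1) * freudP n)
  rw [derivative_mul, map_add, freudL_X_cube_mul, freudL_mul_derivative, mul_comm (derivative _),
    freudL_derivative_mul, ← freudCoeff_mul] at h
  refine mul_right_cancel₀ (freudH_pos n).ne' ?_
  linear_combination h

lemma freudCoeff_pos (n : ℕ) : 0 < freudCoeff (n + 1) :=
  div_pos (freudH_pos _) (freudH_pos _)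

lemma freudCoeff_one : freudCoeff 1 = 2 * Real.Gamma (3 / 4) / Real.Gamma (1 / 4) := by
  have h0 := freudL_X_pow_even 0 (by decide)
  have h2 := freudL_X_pow_even 2 (by decide)
  have hG : Real.Gamma (1 / 4) ≠ 0 := (Real.Gamma_pos_of_pos (by norm_num)).ne'
  have hr : (1 / 4 : ℝ) ^ (-(3 / 4) : ℝ) = 2 * (1 / 4 : ℝ) ^ (-(1 / 4) : ℝ) := by
    rw [show (-(3 / 4) : ℝ) = -(1 / 2) + -(1 / 4) by norm_num, Real.rpow_add (by norm_num)]
    congr 1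
    rw [Real.rpow_neg (by norm_num), ← Real.sqrt_eq_rpow, show (1 / 4 : ℝ) = (1 / 2) ^ 2 by norm_num,
      Real.sqrt_sq (by norm_num)]
    norm_num
  have hp : (0 : ℝ) < (1 / 4 : ℝ) ^ (-(1 / 4) : ℝ) := by positivity
  rw [show freudCoeff 1 = freudL (X ^ 2) / freudL (X ^ 0) by
    simp [freudCoeff, freudH, freudP, pow_two], h0, h2]
  rw [show (-(((2 : ℕ) : ℝ) + 1) / 4) = -(3 / 4) by norm_num,
    show (-(((0 : ℕ) : ℝ) + 1) / 4) = -(1 / 4) by norm_num,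
    show (((2 : ℕ) : ℝ) + 1) / 4 = 3 / 4 by norm_num,
    show (((0 : ℕ) : ℝ) + 1) / 4 = 1 / 4 by norm_num, hr]
  field_simp

/-! ### Uniqueness -/

/-- A positive solution of the difference equation `n = x n * (x (n + 1) + x n + x (n - 1))`
with `x 0 = 0`. -/
def IsPosSol (x : ℕ → ℝ) : Prop :=
  x 0 = 0 ∧ (∀ n : ℕ, 1 ≤ n → (n : ℝ) = x n * (x (n + 1) + x n + x (n - 1))) ∧
    (∀ n : ℕ, 1 ≤ n → 0 < x n)

lemma IsPosSol.nonneg {x : ℕ → ℝ} (hx : IsPosSol x) (n : ℕ) : 0 ≤ x n := by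
  rcases n.eq_zero_or_pos with rfl | h
  · exact hx.1.ge
  · exact (hx.2.2 n h).le

lemma IsPosSol.sq_le {x : ℕ → ℝ} (hx : IsPosSol x) (n : ℕ) : x n ^ 2 ≤ n := by
  rcases n.eq_zero_or_pos with rfl | h
  · simp [hx.1]
  · have h1 := hx.2.1 n h
    have h2 := mul_nonneg (hx.nonneg n) (hx.nonneg (n + 1))
    have h3 := mul_nonneg (hx.nonneg n) (hx.nonneg (n - 1))
    nlinarith

/-- If `x 1 < y 1`, the signed difference `(-1) ^ n * (x n - y n)` is positive at `1` and discretely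
convex, so it grows linearly, against the bound `√n`. -/
lemma IsPosSol.first_le {x y : ℕ → ℝ} (hx : IsPosSol x) (hy : IsPosSol y) : y 1 ≤ x 1 := by
  by_contra! hlt
  set e : ℕ → ℝ := fun n => (-1) ^ n * (x n - y n) with he
  have he1 : 0 < e 1 := by simp [he]; linarith
  have step : ∀ n, 0 ≤ e (n + 1) → e (n + 1) - e n ≤ e (n + 2) - e (n + 1) := by
    intro n hn
    have hxp := hx.2.2 (n + 1) (by omega)
    have hyp := hy.2.2 (n + 1) (by omega)
    have ex := hx.2.1 (n + 1) (by omega)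
    have ey := hy.2.1 (n + 1) (by omega)
    have hx2 := hx.sq_le (n + 1)
    have hy2 := hy.sq_le (n + 1)
    simp only [Nat.add_sub_cancel, add_assoc, Nat.reduceAdd] at ex ey
    set N : ℝ := ((n + 1 : ℕ) : ℝ)
    have hxy : x (n + 1) * y (n + 1) ≤ N := by nlinarith [sq_nonneg (x (n + 1) - y (n + 1))]
    have hid : x (n + 1) * y (n + 1) * (e (n + 2) - 2 * e (n + 1) + e n)
        = (N - x (n + 1) * y (n + 1)) * e (n + 1) := by
      simp only [he, pow_succ]
      linear_combination (-1) ^ n * (x (n + 1) * ey - y (n + 1) * ex)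
    have h0 : 0 ≤ e (n + 2) - 2 * e (n + 1) + e n := by
      refine nonneg_of_mul_nonneg_right (a := x (n + 1) * y (n + 1)) ?_ (mul_pos hxp hyp)
      rw [hid]
      exact mul_nonneg (by linarith) hn
    linarith
  have grow : ∀ n : ℕ, n * e 1 ≤ e n ∧ e 1 ≤ e (n + 1) - e n := by
    intro n
    induction n with
    | zero => simp [he, hx.1, hy.1]
    | succ n ih =>
      have h1 : ((n + 1 : ℕ) : ℝ) * e 1 ≤ e (n + 1) := by push_cast; linarith
      exact ⟨h1, ih.2.trans (step n (le_trans (by positivity) h1))⟩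
  have bound : ∀ n : ℕ, e n ^ 2 ≤ n := by
    intro n
    have h1 : e n ^ 2 = (x n - y n) ^ 2 := by
      simp only [he, mul_pow, ← pow_mul, mul_comm n 2]
      simp [pow_mul]
    have := hx.sq_le n
    have := hy.sq_le n
    have := mul_nonneg (hx.nonneg n) (hy.nonneg n)
    rw [h1]
    -- `(a - b) ^ 2 ≤ max (a ^ 2) (b ^ 2)` for nonnegative `a`, `b`
    rcases le_total (x n) (y n) with h | h
    · nlinarith [mul_nonneg (hx.nonneg n) (sub_nonneg.2 h)]
    · nlinarith [mul_nonneg (hy.nonneg n) (sub_nonneg.2 h)]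
  obtain ⟨n, hn⟩ := exists_nat_gt (1 / e 1 ^ 2)
  have hn0 : (0 : ℝ) < n := lt_trans (by positivity) hn
  have h1 : (n * e 1) ^ 2 ≤ n :=
    (pow_le_pow_left₀ (by positivity) (grow n).1 2).trans (bound n)
  rw [div_lt_iff₀ (by positivity)] at hn
  nlinarith

lemma IsPosSol.unique {x y : ℕ → ℝ} (hx : IsPosSol x) (hy : IsPosSol y) : x = y := by
  have h1 : x 1 = y 1 := le_antisymm (hy.first_le hx) (hx.first_le hy)
  funext n
  induction n using Nat.twoStepInduction with
  | zero => rw [hx.1, hy.1]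
  | one => exact h1
  | more n i0 i1 =>
    have ex := hx.2.1 (n + 1) (by omega)
    have ey := hy.2.1 (n + 1) (by omega)
    simp only [Nat.add_sub_cancel, add_assoc, Nat.reduceAdd] at ex ey
    rw [i0, i1] at ex
    have := mul_left_cancel₀ (hy.2.2 (n + 1) (by omega)).ne' (ex.symm.trans ey)
    linarith

lemma isPosSol_freudCoeff : IsPosSol freudCoeff := by
  refine ⟨rfl, fun n hn => ?_, fun n hn => ?_⟩
  · obtain ⟨n, rfl⟩ := Nat.exists_eq_add_of_le' hn
    exact_mod_cast freudCoeff_eq n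
  · obtain ⟨n, rfl⟩ := Nat.exists_eq_add_of_le' hn
    exact freudCoeff_pos n

/-- The difference equation `n = xₙ (xₙ₊₁ + xₙ + xₙ₋₁)` with `x₀ = 0` has exactly one
positive solution, and this solution has `x₁ = 2 Γ(3/4)/Γ(1/4)`. -/
theorem stmt0 :
    (∃! x : ℕ → ℝ,
      x 0 = 0 ∧
      (∀ n : ℕ, 1 ≤ n → (n : ℝ) = x n * (x (n + 1) + x n + x (n - 1))) ∧
      (∀ n : ℕ, 1 ≤ n → 0 < x n)) ∧
    (∀ x : ℕ → ℝ,
      x 0 = 0 →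
      (∀ n : ℕ, 1 ≤ n → (n : ℝ) = x n * (x (n + 1) + x n + x (n - 1))) →
      (∀ n : ℕ, 1 ≤ n → 0 < x n) →
      x 1 = 2 * Real.Gamma (3 / 4) / Real.Gamma (1 / 4)) := by
  refine ⟨⟨freudCoeff, isPosSol_freudCoeff, fun y hy => IsPosSol.unique hy isPosSol_freudCoeff⟩,
    fun x h0 h1 h2 => ?_⟩
  rw [IsPosSol.unique ⟨h0, h1, h2⟩ isPosSol_freudCoeff, freudCoeff_one]
end

section
/- Let c > 0 and K ∈ ℝ. The difference equation n = c·x_n (x_{n+1} + x_n + x_{n-1}) + K·x_n for all n ≥ 1, with initial value x_0 = 0, has exactly one solution (x_n)_{n≥1} with x_n > 0 for all n ≥ 1, and this solution satisfies x_1 = (∫_ℝ x² exp(−(c/4)x⁴ − (K/2)x²) dx) / (∫_ℝ exp(−(c/4)x⁴ − (K/2)x²) dx). -/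
/-!
**Existence.** For each `N`, the truncated system (`x 0 = 0`, `x n = 0` for `n > N`, the equation for
`1 ≤ n ≤ N`) is the critical-point equation of the energy
`∑ (c xₖ² / 2 + K xₖ - k log xₖ + c xₖ xₖ₊₁)`. On a box `[m, M]ᴺ` with `m` small and `M` large the
energy has a minimiser, and the signs of the partial derivatives on the faces force it into the
interior (`exists_truncated`). The equation bounds `x n` above independently of `N`, so a compactness
argument produces a solution of the whole system (`exists_sol`); the equation itself rules out
`x n = 0` for `n ≥ 1`.

**The value of `x 1`.** A positive solution defines monic polynomials
`Pₙ₊₁ = t Pₙ - xₙ Pₙ₋₁` and a functional `L` with `L(Pₙ) = δₙ₀`. It satisfies `L(p²) ≥ 0`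
(`moment_nonneg`), and the difference equation implies
`Pₙ' = n Pₙ₋₁ + c xₙ xₙ₋₁ xₙ₋₂ Pₙ₋₃`, whence `L(p') = L((c t³ + K t) p)`. Thus `Mₖ = L(t²ᵏ)` satisfies
`c Mₖ₊₂ + K Mₖ₊₁ = (2k + 1) Mₖ` (`moment_rec`). Integration by parts shows that the moments `I_K(k)`
of the weight `exp(-c t⁴/4 - K t²/2)` satisfy the same recurrence, and so does `(-1)ᵏ I_{-K}(k)`
(the same weight on the imaginary axis). Hence `Mₖ = A I_K(k) + B (-1)ᵏ I_{-K}(k)`.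

Applying `L(p²) ≥ 0` and `L(t² p²) ≥ 0` with `p` the Taylor polynomials of `exp(-s t²)` gives in the
limit `A I_{K+4s}(e) + (-1)ᵉ B I_{-K-4s}(e) ≥ 0` for `e = 0, 1`. As `s → ∞` the first integral stays
bounded and the second one grows without bound, so `B ≥ 0` and `-B ≥ 0`. Therefore `B = 0` and
`x 1 = M₁ / M₀ = I_K(1) / I_K(0)` (`first_value`).

**Uniqueness** follows, since `x 0` and `x 1` determine a positive solution through the recurrence.
-/

open MeasureTheory

open Filter Topology Set

/-! ### Moments of the quartic exponential weight -/

/-- The weight `exp(-(c/4) t⁴ - (K/2) t²)`. -/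
noncomputable def wt (c K t : ℝ) : ℝ := Real.exp (-(c / 4) * t ^ 4 - (K / 2) * t ^ 2)

/-- The moment of order `2k` of the weight; `k` is half the order. -/
noncomputable def evenMoment (c K : ℝ) (k : ℕ) : ℝ := ∫ t : ℝ, t ^ (2 * k) * wt c K t

lemma wt_pos (c K t : ℝ) : 0 < wt c K t := Real.exp_pos _

lemma wt_continuous (c K : ℝ) : Continuous (wt c K) := by
  unfold wt; fun_prop

/-- Completing the square bounds the weight by a constant times `exp(-t²)`. -/
lemma wt_integrable (c K : ℝ) (hc : 0 < c) (n : ℕ) :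
    Integrable (fun t : ℝ => t ^ n * wt c K t) := by
  have h := (integrable_rpow_mul_exp_neg_mul_sq (b := 1) one_pos
    (s := (n : ℝ)) (by have := n.cast_nonneg (α := ℝ); linarith)).const_mul
      (Real.exp ((K / 2 - 1) ^ 2 / c))
  refine h.mono ((continuous_pow n).mul (wt_continuous c K)).aestronglyMeasurable
    (Eventually.of_forall fun t => ?_)
  simp only [Real.rpow_natCast, norm_mul, Real.norm_eq_abs, Real.abs_exp, wt]
  rw [mul_left_comm, ← Real.exp_add]
  gcongr
  have : (c / 4) * t ^ 4 + (K / 2 - 1) * t ^ 2 + (K / 2 - 1) ^ 2 / c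
      = (c * t ^ 2 + 2 * (K / 2 - 1)) ^ 2 / (4 * c) := by field_simp; ring
  have h2 : 0 ≤ (c * t ^ 2 + 2 * (K / 2 - 1)) ^ 2 / (4 * c) := by positivity
  linarith

lemma evenMoment_pos (c K : ℝ) (hc : 0 < c) (k : ℕ) : 0 < evenMoment c K k := by
  have hn : ∀ t : ℝ, 0 ≤ t ^ (2 * k) * wt c K t := fun t =>
    mul_nonneg ((even_two_mul k).pow_nonneg t) (wt_pos c K t).le
  refine integral_pos_of_integrable_nonneg_nonzero (x := 1)
    ((continuous_pow _).mul (wt_continuous c K)) (wt_integrable c K hc _) hn ?_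
  simpa using ne_of_gt (wt_pos c K 1)

/-- Integration of the derivative of `t^(2k+1) * wt c K t` over the line. -/
lemma evenMoment_rec (c K : ℝ) (hc : 0 < c) (k : ℕ) :
    c * evenMoment c K (k + 2) + K * evenMoment c K (k + 1) = (2 * k + 1) * evenMoment c K k := by
  have hd : ∀ t : ℝ, HasDerivAt (fun t => t ^ (2 * k + 1) * wt c K t)
      ((2 * k + 1) * (t ^ (2 * k) * wt c K t) - c * (t ^ (2 * (k + 2)) * wt c K t)
        - K * (t ^ (2 * (k + 1)) * wt c K t)) t := by
    intro t
    have h1 : HasDerivAt (fun t : ℝ => -(c / 4) * t ^ 4 - (K / 2) * t ^ 2)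
        (-(c / 4) * (4 * t ^ 3) - (K / 2) * (2 * t)) t := by
      have a := (hasDerivAt_pow 4 t).const_mul (-(c / 4))
      have b := (hasDerivAt_pow 2 t).const_mul (K / 2)
      refine (a.sub b).congr_deriv ?_
      norm_num
    refine ((hasDerivAt_pow (2 * k + 1) t).mul h1.exp).congr_deriv ?_
    simp only [wt]
    push_cast
    ring
  have i0 := (wt_integrable c K hc (2 * k)).const_mul (2 * k + 1 : ℝ)
  have i1 := (wt_integrable c K hc (2 * (k + 1))).const_mul K
  have i2 := (wt_integrable c K hc (2 * (k + 2))).const_mul c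
  have := integral_eq_zero_of_hasDerivAt_of_integrable hd ((i0.sub i2).sub i1)
    (wt_integrable c K hc _)
  have i02 : Integrable (fun t : ℝ => (2 * k + 1) * (t ^ (2 * k) * wt c K t)
      - c * (t ^ (2 * (k + 2)) * wt c K t)) := i0.sub i2
  rw [integral_sub i02 i1, integral_sub i0 i2, integral_const_mul, integral_const_mul,
    integral_const_mul] at this
  unfold evenMoment
  linarith

/-- The double sum is the integral of `t^(2k) * wt c K t` against the square of the Taylor polynomial
of `exp(l t²)`, and multiplying the weight by `exp(2 l t²)` changes `K` into `K - 4 l`. -/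
lemma tendsto_evenMoment (c K l : ℝ) (hc : 0 < c) (k : ℕ) :
    Tendsto (fun N : ℕ => ∑ i ∈ Finset.range N, ∑ j ∈ Finset.range N,
        (l ^ i / i.factorial) * (l ^ j / j.factorial) * evenMoment c K (k + i + j))
      atTop (𝓝 (evenMoment c (K - 4 * l) k)) := by
  have key : ∀ N : ℕ, ∑ i ∈ Finset.range N, ∑ j ∈ Finset.range N,
        (l ^ i / i.factorial) * (l ^ j / j.factorial) * evenMoment c K (k + i + j)
      = ∫ t : ℝ, (∑ i ∈ Finset.range N, (l * t ^ 2) ^ i / i.factorial) ^ 2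
          * (t ^ (2 * k) * wt c K t) := by
    intro N
    have : ∀ t : ℝ, (∑ i ∈ Finset.range N, (l * t ^ 2) ^ i / i.factorial) ^ 2
          * (t ^ (2 * k) * wt c K t) = ∑ i ∈ Finset.range N, ∑ j ∈ Finset.range N,
        (l ^ i / i.factorial) * (l ^ j / j.factorial) *
          (t ^ (2 * (k + i + j)) * wt c K t) := by
      intro t
      rw [sq, Finset.sum_mul_sum, Finset.sum_mul]
      refine Finset.sum_congr rfl fun i _ => ?_
      rw [Finset.sum_mul]
      refine Finset.sum_congr rfl fun j _ => ?_
      ring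
    simp_rw [this]
    rw [integral_finsetSum]
    · refine Finset.sum_congr rfl fun i _ => ?_
      rw [integral_finsetSum]
      · refine Finset.sum_congr rfl fun j _ => ?_
        rw [integral_const_mul, evenMoment]
      · exact fun j _ => (wt_integrable c K hc _).const_mul _
    · exact fun i _ => integrable_finsetSum _ fun j _ => (wt_integrable c K hc _).const_mul _
  have hexp : ∀ s t : ℝ, Real.exp (s * t ^ 2) ^ 2 * (t ^ (2 * k) * wt c K t)
      = t ^ (2 * k) * wt c (K - 4 * s) t := by
    intro s t
    rw [← Real.exp_nat_mul, mul_left_comm, wt, wt, ← Real.exp_add]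
    congr 2
    push_cast
    ring
  simp_rw [key]
  unfold evenMoment
  refine tendsto_integral_of_dominated_convergence
    (fun t => t ^ (2 * k) * wt c (K - 4 * |l|) t) ?_ (wt_integrable c _ hc _) ?_ ?_
  · intro N
    refine Continuous.aestronglyMeasurable ?_
    have := wt_continuous c K
    fun_prop
  · refine fun N => Eventually.of_forall fun t => ?_
    have hn : 0 ≤ t ^ (2 * k) * wt c K t :=
      mul_nonneg ((even_two_mul k).pow_nonneg t) (wt_pos c K t).le
    rw [← hexp, norm_mul, norm_pow, Real.norm_of_nonneg hn]
    gcongr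
    calc ‖∑ i ∈ Finset.range N, (l * t ^ 2) ^ i / (i.factorial : ℝ)‖
        ≤ ∑ i ∈ Finset.range N, (|l| * t ^ 2) ^ i / (i.factorial : ℝ) := by
          refine (norm_sum_le _ _).trans (le_of_eq (Finset.sum_congr rfl fun i _ => ?_))
          simp
      _ ≤ _ := Real.sum_le_exp_of_nonneg (by positivity) N
  · refine Eventually.of_forall fun t => ?_
    rw [← hexp]
    refine Tendsto.mul_const _ (Tendsto.pow ?_ 2)
    have := (NormedSpace.expSeries_div_hasSum_exp (l * t ^ 2)).tendsto_sum_nat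
    rwa [← Real.exp_eq_exp_ℝ] at this

/-- The moments grow at least linearly in `s ≥ 0` when `K` is replaced by `K - 4 s`. -/
lemma evenMoment_lower (c K s : ℝ) (hc : 0 < c) (k : ℕ) :
    2 * s * evenMoment c K (k + 1) ≤ evenMoment c (K - 4 * s) k := by
  unfold evenMoment
  rw [← integral_const_mul]
  refine integral_mono ((wt_integrable c K hc _).const_mul _) (wt_integrable c _ hc _) fun t => ?_
  have h1 : wt c (K - 4 * s) t = Real.exp (2 * s * t ^ 2) * wt c K t := by
    rw [wt, wt, ← Real.exp_add]; congr 1; ring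
  have h2 := Real.add_one_le_exp (2 * s * t ^ 2)
  have h3 : 2 * s * t ^ 2 ≤ Real.exp (2 * s * t ^ 2) := by linarith
  have hn : 0 ≤ t ^ (2 * k) * wt c K t :=
      mul_nonneg ((even_two_mul k).pow_nonneg t) (wt_pos c K t).le
  simp only [h1]
  calc _ = 2 * s * t ^ 2 * (t ^ (2 * k) * wt c K t) := by ring
    _ ≤ Real.exp (2 * s * t ^ 2) * (t ^ (2 * k) * wt c K t) := by gcongr
    _ = _ := by ring

lemma evenMoment_anti (c K s : ℝ) (hc : 0 < c) (hs : 0 ≤ s) (k : ℕ) :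
    evenMoment c (K + 4 * s) k ≤ evenMoment c K k := by
  unfold evenMoment
  refine integral_mono (wt_integrable c _ hc _) (wt_integrable c _ hc _) fun t => ?_
  have := (even_two_mul k).pow_nonneg t
  simp only [wt]
  gcongr
  linarith

/-! ### The moment functional of a positive solution -/

/-- Multiplication by `t` in the basis of polynomials `Pₙ` with `t Pₙ = Pₙ₊₁ + xₙ Pₙ₋₁`; `v n` is the
coefficient of `Pₙ`. -/
def jac (x : ℕ → ℝ) (v : ℕ → ℝ) : ℕ → ℝ
  | 0 => x 1 * v 1
  | n + 1 => v n + x (n + 2) * v (n + 2)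

/-- Differentiation in the basis `Pₙ`, given by `Pₙ ↦ n Pₙ₋₁ + c xₙ xₙ₋₁ xₙ₋₂ Pₙ₋₃`. That this is the
derivative for a solution `x` is the content of `der_jac` and `der_monoVec`. -/
def der (c : ℝ) (x : ℕ → ℝ) (v : ℕ → ℝ) (n : ℕ) : ℝ :=
  (n + 1) * v (n + 1) + c * (x (n + 1) * x (n + 2) * x (n + 3)) * v (n + 3)

/-- `monoVec x k` is the coefficient vector of `t^k` in the basis `Pₙ`. The moment `L(t^k)` of the
functional with `L(Pₙ) = δₙ₀` is `monoVec x k 0`. -/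
def monoVec (x : ℕ → ℝ) : ℕ → ℕ → ℝ
  | 0 => fun n => if n = 0 then 1 else 0
  | k + 1 => jac x (monoVec x k)

/-- The squared norm `L(Pₙ²) = x₁ ⋯ xₙ`. -/
def hNorm (x : ℕ → ℝ) (n : ℕ) : ℝ := ∏ i ∈ Finset.range n, x (i + 1)

/-- `x` is a positive solution of the difference equation with `x 0 = 0`. -/
def IsSol (c K : ℝ) (x : ℕ → ℝ) : Prop :=
  x 0 = 0 ∧ (∀ n : ℕ, 1 ≤ n →
        (n : ℝ) = c * (x n * (x (n + 1) + x n + x (n - 1))) + K * x n) ∧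
      (∀ n : ℕ, 1 ≤ n → 0 < x n)

/-- The commutation relation `[d/dt, t] = 1`, which encodes the difference equation. -/
lemma der_jac {c K : ℝ} {x : ℕ → ℝ} (hx : IsSol c K x) (v : ℕ → ℝ) (n : ℕ) :
    der c x (jac x v) n = jac x (der c x v) n + v n := by
  obtain ⟨h0, he, -⟩ := hx
  have e1 := he (n + 1) (by omega)
  have e2 := he (n + 2) (by omega)
  rcases n with _ | n
  · simp only [der, jac]
    simp [h0] at e1 e2
    push_cast
    linear_combination v 2 * (x 2 * e1 - x 1 * e2)
  · simp only [der, jac]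
    simp only [Nat.add_assoc, Nat.reduceAdd, Nat.reduceSubDiff] at e1 e2 ⊢
    push_cast at e1 e2 ⊢
    linear_combination v (n + 3) * (x (n + 3) * e1 - x (n + 2) * e2)

lemma der_monoVec {c K : ℝ} {x : ℕ → ℝ} (hx : IsSol c K x) (k n : ℕ) :
    der c x (monoVec x (k + 1)) n = (k + 1) * monoVec x k n := by
  induction k generalizing n with
  | zero =>
    change der c x (jac x (monoVec x 0)) n = _
    rw [der_jac hx]
    have : der c x (monoVec x 0) = 0 := by
      funext m; simp [der, monoVec]
    rw [this]
    rcases n with _ | n <;> simp [jac, monoVec]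
  | succ k ih =>
    rw [monoVec, der_jac hx]
    have : der c x (monoVec x (k + 1)) = fun n => (k + 1) * monoVec x k n := funext ih
    rw [this]
    rcases n with _ | n <;> simp only [jac, monoVec] <;> push_cast <;> ring

/-- The identity `L((c t³ + K t) p) = L(p')` for `p = t^(k+1)`: the coefficient of `P₀` in
`(c t³ + K t) p` equals that in `p'`, by the difference equation at `n = 1`. -/
lemma moment_rec {c K : ℝ} {x : ℕ → ℝ} (hx : IsSol c K x) (k : ℕ) :
    c * monoVec x (k + 4) 0 + K * monoVec x (k + 2) 0 = (k + 1) * monoVec x k 0 := by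
  rw [← der_monoVec hx]
  obtain ⟨h0, he, -⟩ := hx
  have e1 := he 1 le_rfl
  simp [h0] at e1
  have a : monoVec x (k + 4) 0 = jac x (jac x (jac x (monoVec x (k + 1)))) 0 := rfl
  have b : monoVec x (k + 2) 0 = jac x (monoVec x (k + 1)) 0 := rfl
  rw [a, b]
  generalize monoVec x (k + 1) = v
  simp only [jac, der, Nat.reduceAdd, Nat.zero_add]
  push_cast
  linear_combination - v 1 * e1

lemma monoVec_zero (x : ℕ → ℝ) {k n : ℕ} (h : k < n) : monoVec x k n = 0 := by
  induction k generalizing n with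
  | zero => simp [monoVec]; omega
  | succ k ih =>
    rcases n with _ | n
    · omega
    · simp only [monoVec, jac]
      rw [ih (by omega), ih (by omega)]; simp

/-- Multiplication by `t` is symmetric for the inner product with weights `hNorm`, up to a boundary
term coming from the truncation of the sum. -/
lemma jac_symm (x v w : ℕ → ℝ) (N : ℕ) :
    ∑ n ∈ Finset.range (N + 1), hNorm x n * (jac x v n * w n)
      = ∑ n ∈ Finset.range (N + 1), hNorm x n * (v n * jac x w n)
        + hNorm x (N + 1) * (v (N + 1) * w N - v N * w (N + 1)) := by
  induction N with
  | zero => simp [hNorm, jac]; ring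
  | succ N ih =>
    rw [Finset.sum_range_succ, ih, Finset.sum_range_succ _ (N + 1)]
    have : hNorm x (N + 1 + 1) = hNorm x (N + 1) * x (N + 2) := Finset.prod_range_succ _ _
    rw [this]
    simp only [jac]
    ring

/-- `L(t^j t^k)` is the inner product of `t^j` and `t^k`. -/
lemma moment_inner (x : ℕ → ℝ) (j k N : ℕ) (h : j + k ≤ N) :
    ∑ n ∈ Finset.range (N + 1), hNorm x n * (monoVec x j n * monoVec x k n)
      = monoVec x (j + k) 0 := by
  induction j generalizing k with
  | zero =>
    rw [Finset.sum_eq_single 0]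
    · simp [hNorm, monoVec]
    · intro n _ hn; simp [monoVec, hn]
    · simp
  | succ j ih =>
    have := jac_symm x (monoVec x j) (monoVec x k) N
    rw [monoVec_zero x (show j < N + 1 by omega), monoVec_zero x (show k < N + 1 by omega)] at this
    change ∑ n ∈ Finset.range (N + 1), hNorm x n * (jac x (monoVec x j) n * _) = _
    rw [this]
    have := ih (k + 1) (by omega)
    rw [show j + 1 + k = j + (k + 1) by omega, ← this]
    simp [monoVec]

/-- `L(p²) ≥ 0` for `p = ∑ aᵢ t^(f i)`. -/
lemma moment_nonneg {c K : ℝ} {x : ℕ → ℝ} (hx : IsSol c K x) (f : ℕ → ℕ) (a : ℕ → ℝ) (r : ℕ) :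
    0 ≤ ∑ i ∈ Finset.range r, ∑ j ∈ Finset.range r, a i * a j * monoVec x (f i + f j) 0 := by
  obtain ⟨N, hN⟩ : ∃ N, ∀ i ∈ Finset.range r, f i ≤ N :=
    ⟨(Finset.range r).sup f, fun i hi => Finset.le_sup hi⟩
  have : ∑ i ∈ Finset.range r, ∑ j ∈ Finset.range r, a i * a j * monoVec x (f i + f j) 0
      = ∑ n ∈ Finset.range (2 * N + 1),
          hNorm x n * (∑ i ∈ Finset.range r, a i * monoVec x (f i) n) ^ 2 := by
    have e : ∀ n, hNorm x n * (∑ i ∈ Finset.range r, a i * monoVec x (f i) n) ^ 2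
        = ∑ i ∈ Finset.range r, ∑ j ∈ Finset.range r,
          a i * a j * (hNorm x n * (monoVec x (f i) n * monoVec x (f j) n)) := by
      intro n
      rw [sq, Finset.sum_mul_sum, Finset.mul_sum]
      refine Finset.sum_congr rfl fun i _ => ?_
      rw [Finset.mul_sum]
      exact Finset.sum_congr rfl fun j _ => by ring
    simp_rw [e]
    rw [Finset.sum_comm (s := Finset.range (2 * N + 1))]
    refine Finset.sum_congr rfl fun i hi => ?_
    rw [Finset.sum_comm (s := Finset.range (2 * N + 1))]
    refine Finset.sum_congr rfl fun j hj => ?_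
    rw [← Finset.mul_sum, moment_inner]
    have := hN i hi
    have := hN j hj
    omega
  rw [this]
  refine Finset.sum_nonneg fun n _ => mul_nonneg (Finset.prod_nonneg fun i _ => ?_) (sq_nonneg _)
  exact (hx.2.2 _ (by omega)).le

/-! ### Existence of a positive solution -/

lemma deriv_nonneg_of_min_right {g : ℝ → ℝ} {d a b : ℝ} (hg : HasDerivAt g d a) (hab : a < b)
    (h : ∀ t ∈ Icc a b, g a ≤ g t) : 0 ≤ d := by
  refine ge_of_tendsto hg.tendsto_slope_zero_right ?_
  filter_upwards [Ioo_mem_nhdsGT (show (0 : ℝ) < b - a by linarith)] with t ht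
  have := h (a + t) ⟨by linarith [ht.1], by linarith [ht.2]⟩
  exact mul_nonneg (inv_nonneg.2 ht.1.le) (by linarith)

lemma deriv_nonpos_of_min_left {g : ℝ → ℝ} {d a b : ℝ} (hg : HasDerivAt g d b) (hab : a < b)
    (h : ∀ t ∈ Icc a b, g b ≤ g t) : d ≤ 0 := by
  refine le_of_tendsto hg.tendsto_slope_zero_left ?_
  filter_upwards [Ioo_mem_nhdsLT (show a - b < (0 : ℝ) by linarith)] with t ht
  have := h (b + t) ⟨by linarith [ht.1], by linarith [ht.2]⟩
  exact mul_nonpos_of_nonpos_of_nonneg (inv_nonpos.2 ht.2.le) (by linarith)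

/-- The function whose critical points solve the system truncated at `N`. -/
noncomputable def energy (c K : ℝ) (N : ℕ) (x : ℕ → ℝ) : ℝ :=
  ∑ k ∈ Finset.range (N + 1),
    (c * (x k ^ 2 / 2) + K * x k - k * Real.log (x k) + c * (x k * x (k + 1)))

lemma energy_deriv (c K : ℝ) (N j : ℕ) (hj : j < N) (x : ℕ → ℝ) (hx : x (j + 1) ≠ 0) :
    HasDerivAt (fun t => energy c K N (Function.update x (j + 1) t))
      (c * (x (j + 2) + x (j + 1) + x j) + K - (j + 1) / x (j + 1)) (x (j + 1)) := by
  have hterm : ∀ k ∈ Finset.range (N + 1), HasDerivAt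
      (fun t => c * (Function.update x (j + 1) t k ^ 2 / 2) + K * Function.update x (j + 1) t k
        - k * Real.log (Function.update x (j + 1) t k)
        + c * (Function.update x (j + 1) t k * Function.update x (j + 1) t (k + 1)))
      ((if k = j + 1 then c * (x (j + 2) + x (j + 1)) + K - (j + 1) / x (j + 1) else 0)
        + (if k = j then c * x j else 0)) (x (j + 1)) := by
    intro k _
    have hid := hasDerivAt_id (x (j + 1))
    by_cases h1 : k = j + 1
    · subst h1
      have := ((((hid.pow 2).div_const 2).const_mul c).add (hid.const_mul K)).sub
        ((hid.log hx).const_mul ((j + 1 : ℕ) : ℝ)) |>.add ((hid.mul_const (x (j + 2))).const_mul c)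
      simp only [Function.update_self, Function.update_of_ne (show j + 1 + 1 ≠ j + 1 by omega),
        if_true, if_neg (show j + 1 ≠ j by omega)]
      refine this.congr_deriv ?_
      simp
      ring
    · by_cases h2 : k = j
      · subst h2
        simp only [Function.update_self, Function.update_of_ne h1, if_true, if_neg h1]
        have := ((hid.const_mul (x k)).const_mul c).const_add
          (c * (x k ^ 2 / 2) + K * x k - k * Real.log (x k))
        refine this.congr_deriv ?_
        simp
      · simp only [Function.update_of_ne h1, Function.update_of_ne
          (show k + 1 ≠ j + 1 by omega), if_neg h1, if_neg h2, add_zero]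
        exact hasDerivAt_const _ _
  have := HasDerivAt.fun_sum hterm
  refine this.congr_deriv ?_
  rw [Finset.sum_add_distrib, Finset.sum_ite_eq', Finset.sum_ite_eq',
    if_pos (by simp; omega), if_pos (by simp; omega)]
  ring

/-- Upper bound for `y = x n`, as the equation with nonnegative neighbours gives
`c y² + K y ≤ n`. -/
lemma sol_upper {c K y : ℝ} (hc : 0 < c) {n : ℕ} (hn : 1 ≤ n)
    (h : c * y ^ 2 + K * y ≤ n) : y ≤ (|K| + n) / c + 1 := by
  by_contra! hy
  have hn' : (1 : ℝ) ≤ n := by exact_mod_cast hn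
  have h0 : 0 ≤ (|K| + n) / c := by positivity
  have h1 : |K| + n < c * y := by
    have : (|K| + n) / c < y := by linarith
    rw [div_lt_iff₀ hc] at this; linarith
  have h2 := neg_abs_le K
  nlinarith

lemma exists_truncated (c K : ℝ) (hc : 0 < c) (N : ℕ) :
    ∃ x : ℕ → ℝ, x 0 = 0 ∧ (∀ n, 0 ≤ x n) ∧ (∀ n, N < n → x n = 0) ∧
      ∀ n : ℕ, 1 ≤ n → n ≤ N →
        (n : ℝ) = c * (x n * (x (n + 1) + x n + x (n - 1))) + K * x n := by
  -- `M` and `m` are chosen so that, on the box, the partial derivatives of the energy are positive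
  -- where a coordinate equals `M` and negative where it equals `m`.
  set M : ℝ := (|K| + N) / c + 1 with hM
  have hM1 : 1 ≤ M := by have : 0 ≤ (|K| + N) / c := by positivity
                         linarith
  have hcM : c * M = |K| + N + c := by rw [hM]; field_simp
  set m : ℝ := 1 / (c * (3 * M) + |K| + 1) with hm
  have hden : 0 < c * (3 * M) + |K| + 1 := by positivity
  have hm0 : 0 < m := by positivity
  have hmd : m * (c * (3 * M) + |K| + 1) = 1 := by rw [hm]; field_simp
  have hmM : m < M := by
    refine lt_of_lt_of_le ?_ hM1
    have : 0 < c * (3 * M) + |K| := by positivity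
    nlinarith
  set S : Set (ℕ → ℝ) := Set.pi univ
    (fun n => if 1 ≤ n ∧ n ≤ N then Icc m M else {0}) with hS
  have hSc : IsCompact S := isCompact_univ_pi fun n => by
    split_ifs
    · exact isCompact_Icc
    · exact isCompact_singleton
  have hSn : S.Nonempty := by
    refine ⟨fun n => if 1 ≤ n ∧ n ≤ N then m else 0, fun n _ => ?_⟩
    simp only
    split_ifs
    · exact ⟨le_rfl, hmM.le⟩
    · rfl
  have hin : ∀ x ∈ S, ∀ n, 1 ≤ n → n ≤ N → x n ∈ Icc m M := by
    intro x hx n h1 h2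
    have := hx n (mem_univ _)
    simpa only [if_pos (And.intro h1 h2)] using this
  have hout : ∀ x ∈ S, ∀ n, ¬ (1 ≤ n ∧ n ≤ N) → x n = 0 := by
    intro x hx n h1
    have := hx n (mem_univ _)
    simpa only [if_neg h1, mem_singleton_iff] using this
  have hbd : ∀ x ∈ S, ∀ n, x n ∈ Icc 0 M := by
    intro x hx n
    by_cases h : 1 ≤ n ∧ n ≤ N
    · have := hin x hx n h.1 h.2
      exact ⟨hm0.le.trans this.1, this.2⟩
    · rw [hout x hx n h]; exact ⟨le_rfl, by linarith⟩
  have hcont : ContinuousOn (energy c K N) S := by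
    unfold energy
    refine continuousOn_finsetSum _ fun k hk => ?_
    have hl : ContinuousOn (fun x : ℕ → ℝ => (k : ℝ) * Real.log (x k)) S := by
      rcases Nat.eq_zero_or_pos k with rfl | hk0
      · simpa using continuousOn_const
      · refine continuousOn_const.mul (ContinuousOn.log (by fun_prop) fun x hx => ?_)
        have := (hin x hx k hk0 (by simp at hk; omega)).1
        linarith
    refine ContinuousOn.add (ContinuousOn.sub ?_ hl) ?_ <;> fun_prop
  obtain ⟨x, hxS, hmin⟩ := hSc.exists_isMinOn hSn hcont
  refine ⟨x, hout x hxS 0 (by omega), fun n => (hbd x hxS n).1,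
    fun n hn => hout x hxS n (by omega), ?_⟩
  intro n hn1 hnN
  obtain ⟨j, rfl⟩ : ∃ j, n = j + 1 := ⟨n - 1, by omega⟩
  have hxn := hin x hxS (j + 1) hn1 hnN
  have hpos : 0 < x (j + 1) := hm0.trans_le hxn.1
  have hd := energy_deriv c K N j (by omega) x hpos.ne'
  have hup : ∀ t ∈ Icc m M, energy c K N (Function.update x (j + 1) (x (j + 1)))
      ≤ energy c K N (Function.update x (j + 1) t) := by
    intro t ht
    rw [Function.update_eq_self]
    refine hmin fun i _ => ?_
    by_cases hi : i = j + 1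
    · subst hi
      simpa only [Function.update_self, if_pos (And.intro hn1 hnN)] using ht
    · rw [Function.update_of_ne hi]; exact hxS i (mem_univ _)
  have ha := hbd x hxS (j + 2)
  have hb := hbd x hxS j
  -- `d` is the partial derivative of the energy at the minimiser.
  set d := c * (x (j + 2) + x (j + 1) + x j) + K - (j + 1) / x (j + 1) with hdd
  have hdx : d * x (j + 1) = c * (x (j + 1) * (x (j + 2) + x (j + 1) + x j))
      + K * x (j + 1) - (j + 1) := by rw [hdd]; field_simp
  have hright : x (j + 1) < M → 0 ≤ d := fun h =>
    deriv_nonneg_of_min_right hd h fun t ht => hup t ⟨hxn.1.trans ht.1, ht.2⟩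
  have hleft : m < x (j + 1) → d ≤ 0 := fun h =>
    deriv_nonpos_of_min_left hd h fun t ht => hup t ⟨ht.1, ht.2.trans hxn.2⟩
  have hjN : (j : ℝ) + 1 ≤ N := by exact_mod_cast hnN
  have hj0 : (0 : ℝ) ≤ j := j.cast_nonneg
  have hK1 := neg_abs_le K
  have hK2 := le_abs_self K
  have hgt : m < x (j + 1) := by
    refine lt_of_le_of_ne hxn.1 fun he => ?_
    have h0 := hright (he ▸ hmM)
    rw [← he] at hdx
    have h1 : 0 ≤ d * m := mul_nonneg h0 hm0.le
    have h2 : c * (x (j + 2) + m + x j) ≤ c * (3 * M) := by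
      gcongr; linarith [ha.2, hb.2]
    nlinarith
  have hlt : x (j + 1) < M := by
    refine lt_of_le_of_ne hxn.2 fun he => ?_
    have h0 := hleft hgt
    rw [he] at hdx
    have h1 : d * M ≤ 0 := mul_nonpos_of_nonpos_of_nonneg h0 (by linarith)
    have h2 : 0 ≤ c * M * (x (j + 2) + x j) := by
      have := ha.1
      have := hb.1
      positivity
    nlinarith
  have hd0 : d = 0 := le_antisymm (hleft hgt) (hright hlt)
  rw [hd0] at hdx
  push_cast
  change (j : ℝ) + 1 = c * (x (j + 1) * (x (j + 2) + x (j + 1) + x j)) + K * x (j + 1)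
  linarith

lemma exists_sol (c K : ℝ) (hc : 0 < c) : ∃ x : ℕ → ℝ, x 0 = 0 ∧ (∀ n : ℕ, 1 ≤ n →
        (n : ℝ) = c * (x n * (x (n + 1) + x n + x (n - 1))) + K * x n) ∧
      (∀ n : ℕ, 1 ≤ n → 0 < x n) := by
  set B : Set (ℕ → ℝ) := Set.pi univ (fun n => Icc 0 ((|K| + n) / c + 1)) with hB
  have hBc : IsCompact B := isCompact_univ_pi fun n => isCompact_Icc
  let T : ℕ → Set (ℕ → ℝ) := fun N => B ∩ {x | x 0 = 0 ∧ ∀ n : ℕ, 1 ≤ n → n ≤ N →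
    (n : ℝ) = c * (x n * (x (n + 1) + x n + x (n - 1))) + K * x n}
  have hcl : ∀ N, IsClosed (T N) := by
    intro N
    refine hBc.isClosed.inter ?_
    simp only [ofPred_and, ofPred_forall]
    refine (isClosed_eq (by fun_prop) (by fun_prop)).inter ?_
    refine isClosed_iInter fun n => isClosed_iInter fun _ => isClosed_iInter fun _ =>
      isClosed_eq (by fun_prop) (by fun_prop)
  have hne : ∀ N, (T N).Nonempty := by
    intro N
    obtain ⟨x, h0, hnn, hz, he⟩ := exists_truncated c K hc N
    refine ⟨x, fun n _ => ⟨hnn n, ?_⟩, h0, he⟩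
    by_cases h : 1 ≤ n ∧ n ≤ N
    · refine sol_upper hc h.1 ?_
      rw [he n h.1 h.2]
      have : 0 ≤ c * (x n * (x (n + 1) + x (n - 1))) :=
        mul_nonneg hc.le (mul_nonneg (hnn _) (add_nonneg (hnn _) (hnn _)))
      linarith
    · have : x n = 0 := by
        rcases Nat.eq_zero_or_pos n with rfl | hp
        · exact h0
        · exact hz n (by omega)
      rw [this]; positivity
  have hanti : ∀ N, T (N + 1) ⊆ T N := fun N x hx =>
    ⟨hx.1, hx.2.1, fun n h1 h2 => hx.2.2 n h1 (by omega)⟩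
  obtain ⟨x, hx⟩ := IsCompact.nonempty_iInter_of_sequence_nonempty_isCompact_isClosed T hanti hne
    (hBc.of_isClosed_subset (hcl 0) inter_subset_left) hcl
  rw [mem_iInter] at hx
  have he : ∀ n : ℕ, 1 ≤ n →
      (n : ℝ) = c * (x n * (x (n + 1) + x n + x (n - 1))) + K * x n :=
    fun n hn => (hx n).2.2 n hn le_rfl
  refine ⟨x, (hx 0).2.1, he, fun n hn => ?_⟩
  refine lt_of_le_of_ne ((hx 0).1 n (mem_univ _)).1 fun h => ?_
  have := he n hn
  rw [← h] at this
  simp at this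
  omega

/-! ### The first value and uniqueness -/

lemma first_value {c K : ℝ} (hc : 0 < c) {x : ℕ → ℝ} (hx : IsSol c K x) :
    x 1 = evenMoment c K 1 / evenMoment c K 0 := by
  have hm0 : monoVec x (2 * 0) 0 = 1 := by simp [monoVec]
  have hm1 : monoVec x (2 * 1) 0 = x 1 := by simp [monoVec, jac]
  have a0 := evenMoment_pos c K hc 0
  have a1 := evenMoment_pos c K hc 1
  have b0 := evenMoment_pos c (-K) hc 0
  have b1 := evenMoment_pos c (-K) hc 1
  set D : ℝ := evenMoment c K 0 * evenMoment c (-K) 1 + evenMoment c K 1 * evenMoment c (-K) 0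
    with hD
  have hD0 : 0 < D := by positivity
  obtain ⟨A, hA⟩ : ∃ A, A = (evenMoment c (-K) 1 + x 1 * evenMoment c (-K) 0) / D := ⟨_, rfl⟩
  obtain ⟨B, hB⟩ : ∃ B, B = (evenMoment c K 1 - x 1 * evenMoment c K 0) / D := ⟨_, rfl⟩
  -- `A` and `B` match the moments of order 0 and 2; the recurrence does the rest.
  have hrep : ∀ k, monoVec x (2 * k) 0
      = A * evenMoment c K k + B * ((-1) ^ k * evenMoment c (-K) k) := by
    intro k
    induction k using Nat.twoStepInduction with
    | zero => rw [hm0, hA, hB]; field_simp; rw [hD]; ring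
    | one => rw [hm1, hA, hB]; field_simp; rw [hD]; ring
    | more k ih0 ih1 =>
      have r := moment_rec hx (2 * k)
      have ra := evenMoment_rec c K hc k
      have rb := evenMoment_rec c (-K) hc k
      rw [show 2 * k + 4 = 2 * (k + 2) by ring, show 2 * k + 2 = 2 * (k + 1) by ring, ih0, ih1] at r
      push_cast at r
      refine mul_left_cancel₀ hc.ne' ?_
      simp only [pow_succ] at r ⊢
      linear_combination r - A * ra - B * (-1) ^ k * rb
  -- `L(t^(2e) p²) ≥ 0` with `p` the Taylor polynomials of `exp(-s t²)`, in the limit.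
  have hpos : ∀ (e : ℕ) (s : ℝ), 0 ≤ A * evenMoment c (K + 4 * s) e
      + (-1) ^ e * B * evenMoment c (-K - 4 * s) e := by
    intro e s
    have t1 := (tendsto_evenMoment c K (-s) hc e).const_mul A
    have t2 := (tendsto_evenMoment c (-K) s hc e).const_mul ((-1) ^ e * B)
    have t := t1.add t2
    rw [show K - 4 * -s = K + 4 * s by ring] at t
    refine ge_of_tendsto' t fun N => ?_
    refine (moment_nonneg hx (fun i => 2 * i + e) (fun i => (-s) ^ i / i.factorial) N).trans_eq ?_
    simp only [Finset.mul_sum, ← Finset.sum_add_distrib]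
    refine Finset.sum_congr rfl fun i _ => Finset.sum_congr rfl fun j _ => ?_
    rw [show 2 * i + e + (2 * j + e) = 2 * (e + i + j) by ring, hrep, neg_pow s i, neg_pow s j]
    have hi : ((-1 : ℝ) ^ i) * (-1) ^ i = 1 := by rw [← mul_pow]; simp
    have hj : ((-1 : ℝ) ^ j) * (-1) ^ j = 1 := by rw [← mul_pow]; simp
    simp only [pow_add]
    generalize evenMoment c (-K) (e + i + j) = z
    linear_combination (B * (-1) ^ e * z * (s ^ i / i.factorial) * (s ^ j / j.factorial))
      * ((-1) ^ j * (-1) ^ j * hi + hj)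
  -- For a negative coefficient, the linear growth in `s` would violate `hpos` for large `s`.
  have hsign : ∀ e : ℕ, 0 ≤ (-1) ^ e * B := by
    intro e
    by_contra! hb
    have p0 := evenMoment_pos c K hc e
    have p1 := evenMoment_pos c (-K) hc (e + 1)
    set b : ℝ := -((-1) ^ e * B) with hbdef
    have hb0 : 0 < b := by linarith
    set q : ℝ := |A| * evenMoment c K e with hq
    have hq0 : 0 ≤ q := by positivity
    set s : ℝ := (q + 1) / (2 * b * evenMoment c (-K) (e + 1)) with hs
    have hs0 : 0 ≤ s := by positivity
    have h1 := hpos e s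
    have h2 : A * evenMoment c (K + 4 * s) e ≤ q :=
      (mul_le_mul_of_nonneg_right (le_abs_self A) (evenMoment_pos c _ hc e).le).trans
        (mul_le_mul_of_nonneg_left (evenMoment_anti c K s hc hs0 e) (abs_nonneg A))
    have h3 := mul_le_mul_of_nonneg_left (evenMoment_lower c (-K) s hc e) hb0.le
    have h4 : b * (2 * s * evenMoment c (-K) (e + 1)) = q + 1 := by
      rw [hs]; field_simp
    rw [show (-1 : ℝ) ^ e * B = -b by rw [hbdef]; ring] at h1
    linarith
  have hB0 : B = 0 := by
    have h0 := hsign 0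
    have h1 := hsign 1
    norm_num at h0 h1
    linarith
  rw [hB0, eq_comm, div_eq_zero_iff] at hB
  rw [eq_div_iff a0.ne']
  rcases hB with h | h
  · linarith
  · exact absurd h hD0.ne'

lemma sol_unique {c K : ℝ} (hc : 0 < c) {x y : ℕ → ℝ} (hx : IsSol c K x) (hy : IsSol c K y) :
    y = x := by
  have h : ∀ n, y n = x n ∧ y (n + 1) = x (n + 1) := by
    intro n
    induction n with
    | zero => exact ⟨by rw [hx.1, hy.1], by
        rw [zero_add, first_value hc hx, first_value hc hy]⟩
    | succ n ih =>
      refine ⟨ih.2, ?_⟩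
      have ex := hx.2.1 (n + 1) (by omega)
      have ey := hy.2.1 (n + 1) (by omega)
      rw [Nat.add_sub_cancel] at ex ey
      rw [ih.1, ih.2] at ey
      have hp := hx.2.2 (n + 1) (by omega)
      have : c * x (n + 1) ≠ 0 := (mul_pos hc hp).ne'
      refine mul_left_cancel₀ this ?_
      linarith
  exact funext fun n => (h n).1

/-- For `c > 0` and `K ∈ ℝ`, the difference equation
`n = c·xₙ (xₙ₊₁ + xₙ + xₙ₋₁) + K·xₙ` with `x₀ = 0` has exactly one positive solution,
and this solution satisfies
`x₁ = (∫ x² exp(−(c/4)x⁴ − (K/2)x²) dx) / (∫ exp(−(c/4)x⁴ − (K/2)x²) dx)`. -/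
theorem stmt1 (c K : ℝ) (hc : 0 < c) :
    (∃! x : ℕ → ℝ,
      x 0 = 0 ∧
      (∀ n : ℕ, 1 ≤ n →
        (n : ℝ) = c * (x n * (x (n + 1) + x n + x (n - 1))) + K * x n) ∧
      (∀ n : ℕ, 1 ≤ n → 0 < x n)) ∧
    (∀ x : ℕ → ℝ,
      x 0 = 0 →
      (∀ n : ℕ, 1 ≤ n →
        (n : ℝ) = c * (x n * (x (n + 1) + x n + x (n - 1))) + K * x n) →
      (∀ n : ℕ, 1 ≤ n → 0 < x n) →
      x 1 = (∫ t : ℝ, t ^ 2 * Real.exp (-(c / 4) * t ^ 4 - (K / 2) * t ^ 2)) /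
            (∫ t : ℝ, Real.exp (-(c / 4) * t ^ 4 - (K / 2) * t ^ 2))) := by
  obtain ⟨x, hx⟩ := exists_sol c K hc
  refine ⟨⟨x, hx, fun y hy => sol_unique hc hx hy⟩, fun y h0 he hp => ?_⟩
  rw [first_value hc (K := K) (x := y) ⟨h0, he, hp⟩]
  simp [evenMoment, wt]
end

section
/- Suppose ℓ_n > 0, σ_{n,0} > 0, σ_{n,1} > 0, σ_{n,-1} > 0 and κ_n ∈ ℝ for every n ≥ 1. Then for every x_0 ∈ ℝ there exists at least one x_1 > 0 such that the sequence (x_n)_{n≥0} determined by x_0, x_1 and the equation ℓ_n = x_n (σ_{n,1} x_{n+1} + σ_{n,0} x_n + σ_{n,-1} x_{n-1}) + κ_n x_n for all n ≥ 1 satisfies x_n > 0 for all n ≥ 1. -/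
/-!
The proof is a shooting argument in the parameter `t = x₁`. Write `Xₙ(t)` for the `n`-th term of
the sequence started at `x₀, t` (`shoot`). Nested compact intervals `Jₙ` are built, with end points
`p, q`, on which `Xₙ > 0` (if `n ≥ 1`), `Xₙ₊₁` vanishes exactly at `p` and is positive elsewhere,
and `Xₙ₊₁(q)` is at least a threshold `Bₙ` (`shootBound`) chosen so large that `Xₙ₊₂(q) ≤ 0`.

In the step from `Jₙ` to `Jₙ₊₁` (`shoot_step`), the term `ℓ / Xₙ₊₁` makes `Xₙ₊₂` as large as
desired at some point `r` close to `p`, whereas `Xₙ₊₂(q) ≤ 0`. The new interval runs from `r` to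
the first zero of `Xₙ₊₂` between `r` and `q`; it avoids `p`, so `Xₙ₊₁ > 0` on it. A point in the
intersection of all `Jₙ` is an admissible `x₁`. The orientation of the intervals alternates, hence
the use of unordered intervals `uIcc`.
-/

open Set

/-- The zero of `f` nearest to `r`, when `f` changes sign between `r` and `q`. -/
lemma exists_first_zero (f : ℝ → ℝ) (r q : ℝ) (hf : ContinuousOn f (uIcc r q))
    (hr : 0 < f r) (hq : f q ≤ 0) :
    ∃ p ∈ uIcc r q, f p = 0 ∧ ∀ t ∈ uIcc r p, t ≠ p → 0 < f t := by
  have hcomp : IsCompact (uIcc r q ∩ f ⁻¹' {0}) :=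
    isCompact_uIcc.of_isClosed_subset
      (hf.preimage_isClosed_of_isClosed isClosed_Icc isClosed_singleton) inter_subset_left
  have hne : (uIcc r q ∩ f ⁻¹' {0}).Nonempty := by
    obtain ⟨z, hz, hz0⟩ := intermediate_value_uIcc hf (mem_uIcc.2 (Or.inr ⟨hq, hr.le⟩))
    exact ⟨z, hz, hz0⟩
  obtain ⟨p, ⟨hp, hp0⟩, hmin⟩ := hcomp.exists_isMinOn hne
    (f := fun t => |t - r|) (by fun_prop)
  refine ⟨p, hp, hp0, fun t ht htp => ?_⟩
  by_contra hcon
  have hsub : uIcc r t ⊆ uIcc r q :=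
    uIcc_subset_uIcc left_mem_uIcc (uIcc_subset_uIcc left_mem_uIcc hp ht)
  obtain ⟨z, hz, hz0⟩ := intermediate_value_uIcc (hf.mono hsub)
    (mem_uIcc.2 (Or.inr ⟨not_lt.1 hcon, hr.le⟩))
  have h1 : |p - r| ≤ |z - r| := hmin ⟨hsub hz, hz0⟩
  have h2 : |z - r| ≤ |t - r| := abs_sub_left_of_mem_uIcc hz
  apply htp
  rcases mem_uIcc.1 ht with h | h
  · rw [abs_of_nonneg (by linarith : 0 ≤ t - r)] at h2
    rw [abs_of_nonneg (by linarith : 0 ≤ p - r)] at h1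
    linarith
  · rw [abs_of_nonpos (by linarith : t - r ≤ 0)] at h2
    rw [abs_of_nonpos (by linarith : p - r ≤ 0)] at h1
    linarith

/-- One step of the construction, for three consecutive terms `u`, `v` and
`w = (l / v - s0 v - sm u - k) / s1` seen as functions of the shooting parameter. -/
lemma shoot_step (l s1 s0 sm k c B B' p q : ℝ) (u v : ℝ → ℝ)
    (hl : 0 < l) (hs1 : 0 < s1) (hs0 : 0 < s0) (hsm : 0 < sm) (hB : 0 < B) (hB' : 0 < B')
    (hu : ContinuousOn u (uIcc p q)) (hv : ContinuousOn v (uIcc p q))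
    (huc : ∀ t ∈ uIcc p q, -c ≤ u t) (hvp : v p = 0)
    (hvpos : ∀ t ∈ uIcc p q, t ≠ p → 0 < v t) (hvq : B ≤ v q)
    (hneg : ∀ x y, B ≤ x → -c ≤ y → l / x - s0 * x - sm * y - k ≤ 0) :
    ∃ p' q', uIcc p' q' ⊆ uIcc p q ∧
      ContinuousOn (fun t => (l / v t - s0 * v t - sm * u t - k) / s1) (uIcc p' q') ∧
      (∀ t ∈ uIcc p' q', 0 < v t) ∧
      (l / v p' - s0 * v p' - sm * u p' - k) / s1 = 0 ∧
      (∀ t ∈ uIcc p' q', t ≠ p' → 0 < (l / v t - s0 * v t - sm * u t - k) / s1) ∧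
      B' ≤ (l / v q' - s0 * v q' - sm * u q' - k) / s1 := by
  obtain ⟨M, hM⟩ := isCompact_uIcc.exists_bound_of_continuousOn hu
  have hM0 : 0 ≤ M := (norm_nonneg _).trans (hM p left_mem_uIcc)
  have hD : 0 < s0 * B + sm * M + |k| + s1 * B' := by positivity
  -- A value of `v` so small that the term `l / v` outweighs all the others.
  obtain ⟨ε, hε0, hεB, hεD⟩ : ∃ ε, 0 < ε ∧ ε ≤ B ∧
      s0 * B + sm * M + |k| + s1 * B' ≤ l / ε := by
    refine ⟨min B (l / (s0 * B + sm * M + |k| + s1 * B')), lt_min hB (by positivity),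
      min_le_left _ _, ?_⟩
    rw [le_div_iff₀ (lt_min hB (by positivity)), mul_comm, ← le_div_iff₀ hD]
    exact min_le_right _ _
  obtain ⟨r, hr, hrε⟩ := intermediate_value_uIcc hv
    (mem_uIcc.2 (Or.inl ⟨hvp.trans_le hε0.le, hεB.trans hvq⟩))
  have hrp : r ≠ p := by
    rintro rfl
    linarith
  have hsub : uIcc r q ⊆ uIcc p q := uIcc_subset_uIcc hr right_mem_uIcc
  have hvpos' : ∀ t ∈ uIcc r q, 0 < v t := by
    intro t ht
    refine hvpos t (hsub ht) ?_
    rintro rfl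
    apply hrp
    rcases mem_uIcc.1 ht with h | h <;> rcases mem_uIcc.1 hr with h' | h' <;> linarith
  have hcont : ContinuousOn (fun t => (l / v t - s0 * v t - sm * u t - k) / s1) (uIcc r q) := by
    have hv' := hv.mono hsub
    have hu' := hu.mono hsub
    have hdiv : ContinuousOn (fun t => l / v t) (uIcc r q) :=
      continuousOn_const.div hv' fun t ht => (hvpos' t ht).ne'
    exact (((hdiv.sub (continuousOn_const.mul hv')).sub
      (continuousOn_const.mul hu')).sub continuousOn_const).div_const _
  have hwr : B' ≤ (l / v r - s0 * v r - sm * u r - k) / s1 := by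
    rw [le_div_iff₀ hs1, hrε]
    have h1 : u r ≤ M := (le_abs_self _).trans (hM r hr)
    have h2 := mul_le_mul_of_nonneg_left h1 hsm.le
    have h3 := mul_le_mul_of_nonneg_left hεB hs0.le
    have h4 := le_abs_self k
    linarith
  have hwq : (l / v q - s0 * v q - sm * u q - k) / s1 ≤ 0 :=
    div_nonpos_of_nonpos_of_nonneg (hneg _ _ hvq (huc q right_mem_uIcc)) hs1.le
  obtain ⟨p', hp', hp0, hpos⟩ := exists_first_zero _ r q hcont (hB'.trans_le hwr) hwq
  have hsub' : uIcc p' r ⊆ uIcc r q := uIcc_subset_uIcc hp' left_mem_uIcc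
  exact ⟨p', r, hsub'.trans hsub, hcont.mono hsub', fun t ht => hvpos' t (hsub' ht), hp0,
    fun t ht => hpos t (uIcc_comm p' r ▸ ht), hwr⟩

/-- The `n`-th term, as a function of `t = x₁`, of the sequence determined by `x₀`, `t` and the
difference equation. Beyond a vanishing term the values are meaningless (`ℓ / 0 = 0`). -/
noncomputable def shoot (ℓ σ1 σ0 σm1 κ : ℕ → ℝ) (x₀ : ℝ) : ℕ → ℝ → ℝ
  | 0, _ => x₀
  | 1, t => t
  | n + 2, t => (ℓ (n + 1) / shoot ℓ σ1 σ0 σm1 κ x₀ (n + 1) t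
      - σ0 (n + 1) * shoot ℓ σ1 σ0 σm1 κ x₀ (n + 1) t
      - σm1 (n + 1) * shoot ℓ σ1 σ0 σm1 κ x₀ n t - κ (n + 1)) / σ1 (n + 1)

/-- A threshold for the `(n+1)`-st term above which the `(n+2)`-nd term is nonpositive, as long as
the `n`-th term is at least `-|x₀|`. -/
noncomputable def shootBound (ℓ σ0 σm1 κ : ℕ → ℝ) (x₀ : ℝ) (n : ℕ) : ℝ :=
  1 + (ℓ (n + 1) + |κ (n + 1)| + σm1 (n + 1) * |x₀|) / σ0 (n + 1)

lemma shootBound_neg (l s0 sm k c x y : ℝ) (hl : 0 < l) (hs0 : 0 < s0) (hsm : 0 < sm)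
    (hc : 0 ≤ c) (hx : 1 + (l + |k| + sm * c) / s0 ≤ x) (hy : -c ≤ y) :
    l / x - s0 * x - sm * y - k ≤ 0 := by
  have h0 : 0 ≤ (l + |k| + sm * c) / s0 := by positivity
  have h1 : l / x ≤ l := div_le_self hl.le (by linarith)
  have h2 : (l + |k| + sm * c) / s0 ≤ x := by linarith
  rw [div_le_iff₀ hs0] at h2
  have h3 := mul_le_mul_of_nonneg_left hy hsm.le
  have h4 := neg_abs_le k
  linarith

/-- The properties of the interval `Jₙ` with end points `I.1` and `I.2`, for the family of
sequences `X`, the thresholds `B` and the lower bound `-c` for the terms. -/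
structure ShootInterval (X : ℕ → ℝ → ℝ) (B : ℕ → ℝ) (c : ℝ) (n : ℕ) (I : ℝ × ℝ) : Prop where
  cont : ContinuousOn (X n) (uIcc I.1 I.2)
  cont_succ : ContinuousOn (X (n + 1)) (uIcc I.1 I.2)
  lower : ∀ t ∈ uIcc I.1 I.2, -c ≤ X n t
  pos : 1 ≤ n → ∀ t ∈ uIcc I.1 I.2, 0 < X n t
  zero : X (n + 1) I.1 = 0
  pos_succ : ∀ t ∈ uIcc I.1 I.2, t ≠ I.1 → 0 < X (n + 1) t
  bound : B n ≤ X (n + 1) I.2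


/-- Existence: if all coefficients `ℓₙ, σₙ₀, σₙ₁, σₙ₋₁` are positive, then for every
`x₀ ∈ ℝ` there is at least one `x₁ > 0` such that the sequence determined by the equation
`ℓₙ = xₙ (σₙ₁ xₙ₊₁ + σₙ₀ xₙ + σₙ₋₁ xₙ₋₁) + κₙ xₙ` is positive. -/
theorem stmt2 (ℓ σ1 σ0 σm1 κ : ℕ → ℝ)
    (hℓ : ∀ n : ℕ, 1 ≤ n → 0 < ℓ n)
    (hσ0 : ∀ n : ℕ, 1 ≤ n → 0 < σ0 n)
    (hσ1 : ∀ n : ℕ, 1 ≤ n → 0 < σ1 n)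
    (hσm1 : ∀ n : ℕ, 1 ≤ n → 0 < σm1 n)
    (x₀ : ℝ) :
    ∃ x : ℕ → ℝ, x 0 = x₀ ∧ 0 < x 1 ∧
      (∀ n : ℕ, 1 ≤ n →
        ℓ n = x n * (σ1 n * x (n + 1) + σ0 n * x n + σm1 n * x (n - 1)) + κ n * x n) ∧
      (∀ n : ℕ, 1 ≤ n → 0 < x n) := by
  set X := shoot ℓ σ1 σ0 σm1 κ x₀ with hX
  set B := shootBound ℓ σ0 σm1 κ x₀ with hB
  have hBpos : ∀ n, 0 < B n := by
    intro n
    have h1 := hℓ (n + 1) (by omega)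
    have h2 := hσ0 (n + 1) (by omega)
    have h3 := hσm1 (n + 1) (by omega)
    simp only [hB, shootBound]
    positivity
  have hstart : ShootInterval X B |x₀| 0 (0, B 0) := by
    refine ⟨continuousOn_const, continuousOn_id, fun t _ => neg_abs_le x₀, by simp, rfl, ?_,
      le_refl (B 0)⟩
    intro t ht h0
    have ht' : t ∈ Icc 0 (B 0) := by simpa [uIcc_of_le (hBpos 0).le] using ht
    exact lt_of_le_of_ne ht'.1 (Ne.symm h0)
  have hstep : ∀ n I, ShootInterval X B |x₀| n I →
      ∃ J : ℝ × ℝ, uIcc J.1 J.2 ⊆ uIcc I.1 I.2 ∧ ShootInterval X B |x₀| (n + 1) J := by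
    intro n I h
    have h1 := hℓ (n + 1) (by omega)
    have h2 := hσ0 (n + 1) (by omega)
    have h3 := hσm1 (n + 1) (by omega)
    obtain ⟨p, q, hsub, hc, hpos, hz, hps, hb⟩ := shoot_step (ℓ (n + 1)) (σ1 (n + 1))
      (σ0 (n + 1)) (σm1 (n + 1)) (κ (n + 1)) |x₀| (B n) (B (n + 1)) I.1 I.2 (X n) (X (n + 1))
      h1 (hσ1 (n + 1) (by omega)) h2 h3 (hBpos n) (hBpos (n + 1)) h.cont h.cont_succ h.lower
      h.zero h.pos_succ h.bound
      (fun x y hx hy => shootBound_neg _ _ _ _ _ x y h1 h2 h3 (abs_nonneg x₀) hx hy)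
    exact ⟨(p, q), hsub, h.cont_succ.mono hsub, hc,
      fun t ht => (neg_nonpos.2 (abs_nonneg x₀)).trans (hpos t ht).le, fun _ => hpos, hz, hps, hb⟩
  choose! next hnext_sub hnext using hstep
  let J : ℕ → ℝ × ℝ := fun n => Nat.rec (0, B 0) next n
  have hJ : ∀ n, ShootInterval X B |x₀| n (J n) := by
    intro n
    induction n with
    | zero => exact hstart
    | succ n ih => exact hnext n _ ih
  obtain ⟨t, ht⟩ := IsCompact.nonempty_iInter_of_sequence_nonempty_isCompact_isClosed
    (fun n => uIcc (J n).1 (J n).2) (fun n => hnext_sub n _ (hJ n)) (fun n => nonempty_uIcc)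
    isCompact_uIcc (fun n => isClosed_Icc)
  have hpos : ∀ n, 1 ≤ n → 0 < X n t := fun n hn => (hJ n).pos hn t (mem_iInter.1 ht n)
  refine ⟨fun n => X n t, rfl, hpos 1 le_rfl, ?_, hpos⟩
  intro n hn
  obtain ⟨m, rfl⟩ : ∃ m, n = m + 1 := ⟨n - 1, by omega⟩
  have hx := (hpos (m + 1) hn).ne'
  have hs := (hσ1 (m + 1) hn).ne'
  have hrec : X (m + 1 + 1) t = (ℓ (m + 1) / X (m + 1) t - σ0 (m + 1) * X (m + 1) t
      - σm1 (m + 1) * X m t - κ (m + 1)) / σ1 (m + 1) := rfl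
  simp only [Nat.add_sub_cancel, hrec]
  field_simp
  ring
end

section
/- Suppose ℓ_n > 0, σ_{n,0} > 0, σ_{n,1} ≥ 0, σ_{n,-1} ≥ 0 and κ_n ∈ ℝ for all n ≥ 1, set σ_n := max(σ_{n,-1}, σ_{n,1}), and assume: (i) liminf_{n→∞} (1/n²)(ℓ_n/σ_{n,0} + (κ_n⁻)²/σ_{n,0}²) = 0, where κ_n⁻ := (|κ_n| − κ_n)/2; (ii) for every n ≥ 1 either (★) 2σ_n ≤ σ_{n,0}, or (✧) σ_n ≤ σ_{n,0} < 2σ_n together with −2(σ_{n,0} − σ_n)√ℓ_n ≤ κ_n √(2σ_n − σ_{n,0}); (iii) x_0 ∈ ℝ is arbitrary if n = 1 satisfies (★), while if n = 1 satisfies (✧) then additionally −2(σ_{1,0} − σ_1)√ℓ_1 ≤ (σ_{1,-1} x_0 + κ_1)√(2σ_1 − σ_{1,0}). Then there exists a unique x* > 0 such that every sequence (x_n)_{n≥0} starting from x_0 that satisfies ℓ_n = x_n (σ_{n,1} x_{n+1} + σ_{n,0} x_n + σ_{n,-1} x_{n-1}) + κ_n x_n for all n ≥ 1 and has x_n > 0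 for all n ≥ 1 must have x_1 = x*; in particular the equation has at most one positive solution. -/
/-!
Write the equation as `ℓₙ = xₙ (σₙ₀ xₙ + c)` with `c = σₙ₁ xₙ₊₁ + σₙ₋₁ xₙ₋₁ + κₙ`. For fixed `c`
it has exactly one positive root, and this root is antitone in `c`. Hence positive solutions are
the fixed points of an antitone operator `T` on sequences.

*Rigidity* (`eq_of_coupled`). Suppose `x` solves the equation with neighbours taken from `a`, `y`
solves it with neighbours taken from `c`, and `|aₙ - cₙ| = |xₙ - yₙ|`. Subtracting the two
equations shows that `dₙ = |xₙ - yₙ|` satisfies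
`(ℓₙ + σₙ₀ xₙ yₙ) dₙ ≤ xₙ yₙ σₙ (dₙ₊₁ + dₙ₋₁)`. Conditions (★)/(✧) give
`2 σₙ xₙ yₙ ≤ ℓₙ + σₙ₀ xₙ yₙ`, so `d` is convex with `d₀ = 0`, and `dₙ / n` is nondecreasing.
Since `dₙ² ≤ 2 (ℓₙ / σₙ₀ + (κₙ⁻)² / σₙ₀²)` for `n ≥ 2`, the liminf condition forces `d = 0`.

*Uniqueness* is the case `a = x`, `c = y`. *Existence*, which the unique-existence claim needs as
well (without positive solutions every `x* > 0` would qualify), comes from the monotone operator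
`T ∘ T`: a Knaster-Tarski argument gives `g = T (T g)`, and rigidity applied to `x = g`, `y = T g`,
`a = T g`, `c = g` yields `g = T g`.
-/

lemma exists_pos_root {s l : ℝ} (hs : 0 < s) (hl : 0 < l) (c : ℝ) :
    ∃ r : ℝ, 0 < r ∧ l = r * (s * r + c) := by
  have hd : 0 ≤ c ^ 2 + 4 * s * l := by positivity
  have hq := Real.sq_sqrt hd
  have hlt : |c| < √(c ^ 2 + 4 * s * l) := by
    rw [← Real.sqrt_sq_eq_abs]
    exact Real.sqrt_lt_sqrt (sq_nonneg c) (by nlinarith [mul_pos hs hl])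
  refine ⟨(-c + √(c ^ 2 + 4 * s * l)) / (2 * s), ?_, ?_⟩
  · have := le_abs_self c
    apply div_pos <;> linarith
  · generalize √(c ^ 2 + 4 * s * l) = q at hq
    field_simp
    linarith

lemma root_antitone {s l c c' r r' : ℝ} (hs : 0 < s) (hl : 0 < l) (hr : 0 < r)
    (h : l = r * (s * r + c)) (h' : l = r' * (s * r' + c')) (hc : c ≤ c') : r' ≤ r := by
  by_contra! hlt
  have h1 : 0 < s * r + c := by
    by_contra! hn
    nlinarith
  have h2 : s * r + c < s * r' + c' := by nlinarith
  have h3 := mul_lt_mul'' hlt h2 hr.le h1.le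
  linarith

/-- In case (✧), a positive number lying below the root of `s r² + k r = l` is at most
`√l / √(2M - s)`. -/
lemma diamond_bound {s M l k x : ℝ} (hs : 0 < s) (hl : 0 < l) (hM : s < 2 * M)
    (hk : -2 * (s - M) * √l ≤ k * √(2 * M - s)) (hx : 0 < x)
    (h : x * (s * x + k) ≤ l) : √(2 * M - s) * x ≤ √l := by
  have hq : √(2 * M - s) ^ 2 = 2 * M - s := Real.sq_sqrt (by linarith)
  have hr : √l ^ 2 = l := Real.sq_sqrt hl.le
  have hq0 : 0 < √(2 * M - s) := Real.sqrt_pos.2 (by linarith)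
  have hr0 : 0 < √l := Real.sqrt_pos.2 hl
  set q := √(2 * M - s)
  set r := √l
  by_contra! hlt
  have h1 : q ^ 2 * (x * (s * x + k)) ≤ q ^ 2 * l := mul_le_mul_of_nonneg_left h (sq_nonneg q)
  have h2 : (-2 * (s - M) * r) * (q * x) ≤ (k * q) * (q * x) :=
    mul_le_mul_of_nonneg_right hk (by positivity)
  have h3 : s * (q * x) ^ 2 - 2 * (s - M) * r * (q * x) ≤ (2 * M - s) * r ^ 2 := by
    rw [hr, ← hq]
    linarith
  -- The difference of the two sides of `h3` factors through `q * x - r`.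
  have h4 : 0 < (q * x - r) * (s * (q * x - r) + 2 * M * r) := by
    have : 0 < q * x - r := by linarith
    have : 0 < 2 * M := by linarith
    positivity
  linarith

/-- The convexity inequality at one index, for `X = xₙ`, `Y = yₙ`, with right and
left neighbours `e`, `e'` in the equation for `X` and `p`, `p'` in the equation for `Y`; `M` stands
for `σₙ`. -/
lemma convex_step {s M l s1 sm X Y e e' p p' k : ℝ} (hs : 0 < s) (hl : 0 < l) (h1 : 0 ≤ s1)
    (h1M : s1 ≤ M) (hm : 0 ≤ sm) (hmM : sm ≤ M) (hX : 0 < X) (hY : 0 < Y)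
    (hk : 2 * M * (X * Y) ≤ l + s * (X * Y))
    (hx : l = X * (s1 * e + s * X + sm * e' + k)) (hy : l = Y * (s1 * p + s * Y + sm * p' + k)) :
    2 * |X - Y| ≤ |e - p| + |e' - p'| := by
  have hXY : 0 < X * Y := mul_pos hX hY
  have key : (l + s * (X * Y)) * (X - Y) = -(X * Y * (s1 * (e - p) + sm * (e' - p'))) := by
    linear_combination X * hy - Y * hx
  have habs : (l + s * (X * Y)) * |X - Y| ≤ X * Y * (M * (|e - p| + |e' - p'|)) := by
    have hpos : 0 < l + s * (X * Y) := by positivity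
    rw [← abs_of_pos hpos, ← abs_mul, key, abs_neg, abs_mul, abs_of_pos hXY]
    gcongr
    calc |s1 * (e - p) + sm * (e' - p')| ≤ |s1 * (e - p)| + |sm * (e' - p')| := abs_add_le _ _
      _ = s1 * |e - p| + sm * |e' - p'| := by
        rw [abs_mul, abs_mul, abs_of_nonneg h1, abs_of_nonneg hm]
      _ ≤ M * |e - p| + M * |e' - p'| := by gcongr
      _ = M * (|e - p| + |e' - p'|) := by ring
  rcases (h1.trans h1M).eq_or_lt with hM | hM
  · -- For `M = 0` the inequality forces `X = Y`.
    rw [← hM] at habs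
    have hpos : 0 < l + s * (X * Y) := by positivity
    have h0 : |X - Y| ≤ 0 := by
      by_contra! hc
      nlinarith [mul_pos hpos hc]
    linarith [abs_nonneg (e - p), abs_nonneg (e' - p')]
  · have h2 := (mul_le_mul_of_nonneg_right hk (abs_nonneg (X - Y))).trans habs
    have h3 : 0 < M * (X * Y) := by positivity
    refine le_of_mul_le_mul_left ?_ h3
    linarith

/-- A convex sequence `d` with `d₀ = 0` has `dₙ / n` nondecreasing in `n ≥ 1`. -/
lemma convex_ratio {d : ℕ → ℝ} (h0 : d 0 = 0)
    (hc : ∀ n, 1 ≤ n → 2 * d n ≤ d (n + 1) + d (n - 1)) {k n : ℕ} (hk : 1 ≤ k) (hkn : k ≤ n) :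
    n * d k ≤ k * d n := by
  have step : ∀ n : ℕ, ((n : ℝ) + 1) * d n ≤ n * d (n + 1) := by
    intro n
    induction n with
    | zero => simp [h0]
    | succ n ih =>
      have := hc (n + 1) (by omega)
      simp only [Nat.add_sub_cancel] at this
      push_cast
      nlinarith [mul_le_mul_of_nonneg_left this (show (0 : ℝ) ≤ n + 1 by positivity)]
  induction n, hkn using Nat.le_induction with
  | base => exact le_rfl
  | succ n hkn ih =>
    have hn : (0 : ℝ) < n := by exact_mod_cast (by omega : 0 < n)
    refine le_of_mul_le_mul_left ?_ hn
    push_cast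
    nlinarith [mul_le_mul_of_nonneg_left (step n) (show (0 : ℝ) ≤ k by positivity),
      mul_le_mul_of_nonneg_left ih (show (0 : ℝ) ≤ n + 1 by positivity)]

lemma sq_bound {s l k x : ℝ} (hs : 0 < s) (hx : 0 < x) (h : x * (s * x + k) ≤ l) :
    x ^ 2 ≤ 2 * (l / s + ((|k| - k) / 2) ^ 2 / s ^ 2) := by
  have hk : -k ≤ (|k| - k) / 2 := by linarith [neg_abs_le k]
  set m := (|k| - k) / 2
  have h1 : s * x ^ 2 ≤ l + m * x := by nlinarith
  have h2 : x ^ 2 ≤ l / s + m / s * x := by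
    have : (l + m * x) / s = l / s + m / s * x := by ring
    rw [← this, le_div_iff₀ hs]
    linarith
  rw [← div_pow]
  nlinarith [sq_nonneg (x - m / s), sq_nonneg (m / s)]

/-- Rigidity: two sequences solving the equation with neighbours taken from `a` and `c`
respectively coincide as soon as `|a - c| = |x - y|` termwise. -/
lemma eq_of_coupled (ℓ σ1 σ0 σm1 κ : ℕ → ℝ) (x₀ : ℝ)
    (hℓ : ∀ n : ℕ, 1 ≤ n → 0 < ℓ n)
    (hσ0 : ∀ n : ℕ, 1 ≤ n → 0 < σ0 n)
    (hσ1 : ∀ n : ℕ, 1 ≤ n → 0 ≤ σ1 n)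
    (hσm1 : ∀ n : ℕ, 1 ≤ n → 0 ≤ σm1 n)
    (hliminf :
      Filter.liminf
        (fun n : ℕ =>
          (((1 / (n : ℝ) ^ 2) *
            (ℓ n / σ0 n + ((|κ n| - κ n) / 2) ^ 2 / (σ0 n) ^ 2) : ℝ) : EReal))
        Filter.atTop = 0)
    (hcond : ∀ n : ℕ, 1 ≤ n →
      (2 * max (σm1 n) (σ1 n) ≤ σ0 n) ∨
      (max (σm1 n) (σ1 n) ≤ σ0 n ∧ σ0 n < 2 * max (σm1 n) (σ1 n) ∧
        -2 * (σ0 n - max (σm1 n) (σ1 n)) * Real.sqrt (ℓ n) ≤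
          κ n * Real.sqrt (2 * max (σm1 n) (σ1 n) - σ0 n)))
    (hx₀ : ¬ (2 * max (σm1 1) (σ1 1) ≤ σ0 1) →
      -2 * (σ0 1 - max (σm1 1) (σ1 1)) * Real.sqrt (ℓ 1) ≤
        (σm1 1 * x₀ + κ 1) * Real.sqrt (2 * max (σm1 1) (σ1 1) - σ0 1))
    (x y a c : ℕ → ℝ) (hx : ∀ n, 1 ≤ n → 0 < x n) (hy : ∀ n, 1 ≤ n → 0 < y n)
    (ha : ∀ n, 1 ≤ n → 0 < a n) (hc : ∀ n, 1 ≤ n → 0 < c n)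
    (ha0 : a 0 = x₀) (hc0 : c 0 = x₀)
    (habs : ∀ n, |a n - c n| = |x n - y n|)
    (hxe : ∀ n, 1 ≤ n → ℓ n = x n * (σ1 n * a (n + 1) + σ0 n * x n + σm1 n * a (n - 1) + κ n))
    (hye : ∀ n, 1 ≤ n → ℓ n = y n * (σ1 n * c (n + 1) + σ0 n * y n + σm1 n * c (n - 1) + κ n)) :
    x = y := by
  -- Dropping the nonnegative neighbour terms; at `n = 1` the term with `x₀` has no sign.
  have bnd : ∀ n, 2 ≤ n → ∀ u v v', 0 < u → 0 < v → 0 < v' →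
      ℓ n = u * (σ1 n * v + σ0 n * u + σm1 n * v' + κ n) → u * (σ0 n * u + κ n) ≤ ℓ n := by
    intro n hn u v v' hu hv hv' h
    rw [h]
    have := mul_nonneg (hσ1 n (by omega)) hv.le
    have := mul_nonneg (hσm1 n (by omega)) hv'.le
    gcongr
    linarith
  have bnd1 : ∀ u v, 0 < u → 0 < v →
      ℓ 1 = u * (σ1 1 * v + σ0 1 * u + σm1 1 * x₀ + κ 1) →
      u * (σ0 1 * u + (σm1 1 * x₀ + κ 1)) ≤ ℓ 1 := by
    intro u v hu hv h
    rw [h]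
    have := mul_nonneg (hσ1 1 le_rfl) hv.le
    refine mul_le_mul_of_nonneg_left ?_ hu.le
    linarith
  have hconv : ∀ n, 1 ≤ n →
      2 * |x n - y n| ≤ |x (n + 1) - y (n + 1)| + |x (n - 1) - y (n - 1)| := by
    intro n hn
    rw [← habs (n + 1), ← habs (n - 1)]
    refine convex_step (hσ0 n hn) (hℓ n hn) (hσ1 n hn) (le_max_right _ _) (hσm1 n hn)
      (le_max_left _ _) (hx n hn) (hy n hn) ?_ (hxe n hn) (hye n hn)
    have hXY := mul_pos (hx n hn) (hy n hn)
    by_cases hstar : 2 * max (σm1 n) (σ1 n) ≤ σ0 n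
    · have := mul_le_mul_of_nonneg_right hstar hXY.le
      linarith [hℓ n hn]
    · have hlt := not_le.1 hstar
      have hd := ((hcond n hn).resolve_left hstar).2.2
      have hb : √(2 * max (σm1 n) (σ1 n) - σ0 n) * x n ≤ √(ℓ n) ∧
          √(2 * max (σm1 n) (σ1 n) - σ0 n) * y n ≤ √(ℓ n) := by
        rcases hn.eq_or_lt with rfl | h2
        · have e1 := hxe 1 le_rfl
          have e2 := hye 1 le_rfl
          simp only [Nat.sub_self, ha0, hc0] at e1 e2
          exact ⟨diamond_bound (hσ0 1 hn) (hℓ 1 hn) hlt (hx₀ hstar) (hx 1 hn)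
              (bnd1 _ _ (hx 1 hn) (ha 2 (by omega)) e1),
            diamond_bound (hσ0 1 hn) (hℓ 1 hn) hlt (hx₀ hstar) (hy 1 hn)
              (bnd1 _ _ (hy 1 hn) (hc 2 (by omega)) e2)⟩
        · exact ⟨diamond_bound (hσ0 n hn) (hℓ n hn) hlt hd (hx n hn)
              (bnd n h2 _ _ _ (hx n hn) (ha _ (by omega)) (ha _ (by omega)) (hxe n hn)),
            diamond_bound (hσ0 n hn) (hℓ n hn) hlt hd (hy n hn)
              (bnd n h2 _ _ _ (hy n hn) (hc _ (by omega)) (hc _ (by omega)) (hye n hn))⟩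
      have hm := mul_le_mul hb.1 hb.2
        (mul_nonneg (Real.sqrt_nonneg _) (hy n hn).le) (Real.sqrt_nonneg _)
      have hq := Real.sq_sqrt (show 0 ≤ 2 * max (σm1 n) (σ1 n) - σ0 n by linarith)
      have hr := Real.sq_sqrt (hℓ n hn).le
      have : √(2 * max (σm1 n) (σ1 n) - σ0 n) ^ 2 * (x n * y n) ≤ √(ℓ n) ^ 2 := by
        linarith
      rw [hq, hr] at this
      linarith
  have h00 : |x 0 - y 0| = 0 := by rw [← habs 0, ha0, hc0, sub_self, abs_zero]
  funext k
  rcases Nat.eq_zero_or_pos k with rfl | hk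
  · exact sub_eq_zero.1 (abs_eq_zero.1 h00)
  by_contra hne
  have hd : 0 < |x k - y k| := abs_pos.2 (sub_ne_zero.2 hne)
  have hk0 : (0 : ℝ) < k := by exact_mod_cast hk
  have hε : 0 < |x k - y k| ^ 2 / (2 * (k : ℝ) ^ 2) := by positivity
  have hfreq := Filter.frequently_lt_of_liminf_lt (by isBoundedDefault)
    (lt_of_eq_of_lt hliminf (EReal.coe_pos.2 hε))
  obtain ⟨n, hn, hnk⟩ := (hfreq.and_eventually (Filter.eventually_ge_atTop (k + 2))).exists
  rw [EReal.coe_lt_coe_iff] at hn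
  have hn0 : (0 : ℝ) < n := by exact_mod_cast (by omega : 0 < n)
  have hn1 : 1 ≤ n := by omega
  have hxb := sq_bound (hσ0 n hn1) (hx n hn1)
    (bnd n (by omega) _ _ _ (hx n hn1) (ha _ (by omega)) (ha _ (by omega)) (hxe n hn1))
  have hyb := sq_bound (hσ0 n hn1) (hy n hn1)
    (bnd n (by omega) _ _ _ (hy n hn1) (hc _ (by omega)) (hc _ (by omega)) (hye n hn1))
  set B := ℓ n / σ0 n + ((|κ n| - κ n) / 2) ^ 2 / (σ0 n) ^ 2
  have hdb : |x n - y n| ^ 2 ≤ 2 * B := by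
    rw [sq_abs]
    rcases le_total (x n) (y n) with h | h
    · nlinarith [hx n hn1, hy n hn1]
    · nlinarith [hx n hn1, hy n hn1]
  have hrat : n * |x k - y k| ≤ k * |x n - y n| :=
    convex_ratio (d := fun n => |x n - y n|) h00 hconv hk (by omega)
  have h1 : (n : ℝ) ^ 2 * |x k - y k| ^ 2 ≤ k ^ 2 * |x n - y n| ^ 2 := by
    rw [← mul_pow, ← mul_pow]
    gcongr
  have h2 : (k : ℝ) ^ 2 * |x n - y n| ^ 2 ≤ k ^ 2 * (2 * B) := by gcongr
  rw [one_div_mul_eq_div, div_lt_div_iff₀ (by positivity) (by positivity)] at hn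
  linarith

/-- The square of an antitone operator `T` on real sequences has a fixed point if `T` is bounded
below by some `L` (Knaster-Tarski applied to `T ∘ T`). -/
lemma exists_fixed_sq (T : (ℕ → ℝ) → ℕ → ℝ) (hT : Antitone T) (L : ℕ → ℝ) (hL : ∀ w, L ≤ T w) :
    ∃ g, T (T g) = g := by
  let S : Set (ℕ → ℝ) := {w | w ≤ T (T w)}
  have hTT : ∀ {v w}, v ≤ w → T (T v) ≤ T (T w) := fun h => hT (hT h)
  have hub : ∀ w ∈ S, w ≤ T L := fun w hw => hw.trans (hT (hL _))
  let g : ℕ → ℝ := fun n => sSup (Set.image (fun w : ℕ → ℝ => w n) S)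
  have hle : ∀ w ∈ S, w ≤ g := by
    intro w hw n
    refine le_csSup ⟨T L n, ?_⟩ ⟨w, hw, rfl⟩
    rintro _ ⟨v, hv, rfl⟩
    exact hub v hv n
  have hg : g ≤ T (T g) := by
    intro n
    refine csSup_le ⟨_, L, hL _, rfl⟩ ?_
    rintro _ ⟨v, hv, rfl⟩
    exact (hv n).trans (hTT (hle v hv) n)
  exact ⟨g, le_antisymm (hle _ (hTT hg)) hg⟩

/-- Uniqueness theorem: under the liminf condition and the dichotomy (★)/(✧) on the
coefficients (plus the extra condition on `x₀` when `n = 1` satisfies (✧)), there is a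
unique `x* > 0` such that every positive solution of
`ℓₙ = xₙ (σₙ₁ xₙ₊₁ + σₙ₀ xₙ + σₙ₋₁ xₙ₋₁) + κₙ xₙ` starting from `x₀` has `x₁ = x*`.
Here `σₙ := max(σₙ₋₁, σₙ₁)` and `κ⁻ := (|κ| − κ)/2`. -/
theorem stmt5 (ℓ σ1 σ0 σm1 κ : ℕ → ℝ) (x₀ : ℝ)
    (hℓ : ∀ n : ℕ, 1 ≤ n → 0 < ℓ n)
    (hσ0 : ∀ n : ℕ, 1 ≤ n → 0 < σ0 n)
    (hσ1 : ∀ n : ℕ, 1 ≤ n → 0 ≤ σ1 n)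
    (hσm1 : ∀ n : ℕ, 1 ≤ n → 0 ≤ σm1 n)
    (hliminf :
      Filter.liminf
        (fun n : ℕ =>
          (((1 / (n : ℝ) ^ 2) *
            (ℓ n / σ0 n + ((|κ n| - κ n) / 2) ^ 2 / (σ0 n) ^ 2) : ℝ) : EReal))
        Filter.atTop = 0)
    (hcond : ∀ n : ℕ, 1 ≤ n →
      (2 * max (σm1 n) (σ1 n) ≤ σ0 n) ∨
      (max (σm1 n) (σ1 n) ≤ σ0 n ∧ σ0 n < 2 * max (σm1 n) (σ1 n) ∧
        -2 * (σ0 n - max (σm1 n) (σ1 n)) * Real.sqrt (ℓ n) ≤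
          κ n * Real.sqrt (2 * max (σm1 n) (σ1 n) - σ0 n)))
    (hx₀ : ¬ (2 * max (σm1 1) (σ1 1) ≤ σ0 1) →
      -2 * (σ0 1 - max (σm1 1) (σ1 1)) * Real.sqrt (ℓ 1) ≤
        (σm1 1 * x₀ + κ 1) * Real.sqrt (2 * max (σm1 1) (σ1 1) - σ0 1)) :
    ∃! xstar : ℝ, 0 < xstar ∧
      ∀ x : ℕ → ℝ, x 0 = x₀ →
        (∀ n : ℕ, 1 ≤ n →
          ℓ n = x n * (σ1 n * x (n + 1) + σ0 n * x n + σm1 n * x (n - 1)) + κ n * x n) →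
        (∀ n : ℕ, 1 ≤ n → 0 < x n) →
        x 1 = xstar := by
  have hroot : ∀ n : ℕ, ∀ c : ℝ, ∃ r : ℝ, 1 ≤ n → 0 < r ∧ ℓ n = r * (σ0 n * r + c) := by
    intro n c
    by_cases hn : 1 ≤ n
    · obtain ⟨r, hr⟩ := exists_pos_root (hσ0 n hn) (hℓ n hn) c
      exact ⟨r, fun _ => hr⟩
    · exact ⟨0, fun h => absurd h hn⟩
  choose ρ hρ using hroot
  let T : (ℕ → ℝ) → ℕ → ℝ := fun w n =>
    if n = 0 then x₀ else ρ n (σ1 n * w (n + 1) + σm1 n * w (n - 1) + κ n)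
  have hT0 : ∀ w, T w 0 = x₀ := fun w => if_pos rfl
  have hTn : ∀ w n, 1 ≤ n → T w n = ρ n (σ1 n * w (n + 1) + σm1 n * w (n - 1) + κ n) :=
    fun w n hn => if_neg (by omega)
  have hTpos : ∀ w n, 1 ≤ n → 0 < T w n := by
    intro w n hn
    rw [hTn w n hn]
    exact (hρ n _ hn).1
  have hTeq : ∀ w n, 1 ≤ n →
      ℓ n = T w n * (σ1 n * w (n + 1) + σ0 n * T w n + σm1 n * w (n - 1) + κ n) := by
    intro w n hn
    rw [hTn w n hn]
    refine ((hρ n (σ1 n * w (n + 1) + σm1 n * w (n - 1) + κ n) hn).2).trans ?_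
    ring
  have hTanti : Antitone T := by
    intro v w hvw n
    rcases Nat.eq_zero_or_pos n with rfl | hn
    · rw [hT0, hT0]
    · rw [hTn v n hn, hTn w n hn]
      refine root_antitone (hσ0 n hn) (hℓ n hn) (hρ n _ hn).1 (hρ n _ hn).2
        (hρ n _ hn).2 ?_
      have := mul_le_mul_of_nonneg_left (hvw (n + 1)) (hσ1 n hn)
      have := mul_le_mul_of_nonneg_left (hvw (n - 1)) (hσm1 n hn)
      linarith
  obtain ⟨g, hg⟩ := exists_fixed_sq T hTanti (fun n => if n = 0 then x₀ else 0) (by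
    intro w n
    rcases Nat.eq_zero_or_pos n with rfl | hn
    · simp [hT0]
    · simpa [hn.ne'] using (hTpos w n hn).le)
  have hg0 : g 0 = x₀ := by rw [← hg, hT0]
  have hgpos : ∀ n, 1 ≤ n → 0 < g n := by
    intro n hn
    rw [← hg]
    exact hTpos _ n hn
  have hfix : g = T g := by
    refine eq_of_coupled ℓ σ1 σ0 σm1 κ x₀ hℓ hσ0 hσ1 hσm1 hliminf hcond hx₀ g (T g) (T g) g
      hgpos (hTpos g) (hTpos g) hgpos (hT0 g) hg0 (fun n => abs_sub_comm _ _) ?_ (hTeq g)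
    have := hTeq (T g)
    rwa [hg] at this
  have hgeq : ∀ n, 1 ≤ n →
      ℓ n = g n * (σ1 n * g (n + 1) + σ0 n * g n + σm1 n * g (n - 1) + κ n) := by
    have := hTeq g
    rwa [← hfix] at this
  refine ⟨g 1, ⟨hgpos 1 le_rfl, ?_⟩, ?_⟩
  · intro x hx0 hxe hxpos
    refine congrFun (eq_of_coupled ℓ σ1 σ0 σm1 κ x₀ hℓ hσ0 hσ1 hσm1 hliminf hcond hx₀ x g x g
      hxpos hgpos hxpos hgpos hx0 hg0 (fun n => rfl) ?_ hgeq) 1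
    intro n hn
    linarith [hxe n hn]
  · rintro y ⟨-, hy⟩
    refine (hy g hg0 ?_ hgpos).symm
    intro n hn
    linarith [hgeq n hn]
end

section
/- Suppose ℓ_n > 0, σ_{n,0} > 0, σ_{n,1} ≥ 0, σ_{n,-1} ≥ 0, κ_n ≥ 0 for all n ≥ 1, and that max(σ_{n,-1}, σ_{n,1}) ≤ σ_{n,0} for all n ≥ 1, that liminf_{n→∞} ℓ_n/(n² σ_{n,0}) = 0, and that x_0 ∈ ℝ satisfies σ_{1,-1} x_0 ≥ −κ_1 (in particular x_0 = 0 is allowed). Then there exists a unique x_1 > 0 such that the sequence (x_n)_{n≥0} determined by x_0, x_1 and the equation ℓ_n = x_n (σ_{n,1} x_{n+1} + σ_{n,0} x_n + σ_{n,-1} x_{n-1}) + κ_n x_n for all n ≥ 1 satisfies x_n > 0 for all n ≥ 1. -/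
/-!
Fix the neighbours of `xₙ`. The equation then says that `xₙ` is the positive root of a quadratic
whose linear coefficient `σₙ₁ xₙ₊₁ + σₙ₋₁ xₙ₋₁ + κₙ` is nonnegative, so positive solutions are the
fixed points of an *antitone* map `T` on the box `∏ [0, √(ℓₙ/σₙ₀)]`. Its square is monotone, and by
Knaster–Tarski it has a fixed point `a`; put `b = T a`, so that `a = T b`.

Both existence (`a = b`) and uniqueness (two solutions agree) follow from one comparison. If `w` is
the termwise distance of the two sequences, then `two_mul_abs_sub_le` gives the convexity
`2 wₙ ≤ wₙ₊₁ + wₙ₋₁`, because `ℓₙ ≥ σₙ₀ max(aₙ, bₙ)²`. As `w₀ = 0`, a nonzero `w` grows at least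
linearly, while `wₙ² ≤ ℓₙ/σₙ₀`; this contradicts `liminf ℓₙ/(n² σₙ₀) = 0`
(`eq_zero_of_convex_of_liminf`).
-/

/-- A nonnegative convex sequence vanishing at `0` grows at least linearly unless it is zero, which
the bound by `ℓₙ/σₙ₀` and the liminf hypothesis rule out. -/
lemma eq_zero_of_convex_of_liminf (ℓ σ0 w : ℕ → ℝ)
    (hσ0 : ∀ n : ℕ, 1 ≤ n → 0 < σ0 n)
    (hliminf :
      Filter.liminf (fun n : ℕ => ((ℓ n / ((n : ℝ) ^ 2 * σ0 n) : ℝ) : EReal))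
        Filter.atTop = 0)
    (h0 : w 0 = 0) (hw : ∀ n, 0 ≤ w n)
    (hconv : ∀ n, 2 * w (n + 1) ≤ w (n + 2) + w n)
    (hbd : ∀ n, 1 ≤ n → σ0 n * w n ^ 2 ≤ ℓ n) (m : ℕ) : w m = 0 := by
  -- `wₙ / n` is nondecreasing
  have hratio : ∀ n : ℕ, ((n : ℝ) + 1) * w n ≤ n * w (n + 1) := by
    intro n
    induction n with
    | zero => simp [h0]
    | succ k ih =>
      push_cast
      have := mul_le_mul_of_nonneg_left (hconv k) (by positivity : (0 : ℝ) ≤ (k : ℝ) + 1)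
      linarith
  by_contra hm
  have hmpos : 0 < w m := lt_of_le_of_ne (hw m) (Ne.symm hm)
  have hm1 : 1 ≤ m := by
    rcases Nat.eq_zero_or_pos m with h | h
    · exact absurd (h ▸ h0) hm
    · exact h
  have hmR : (0 : ℝ) < m := by exact_mod_cast hm1
  have hlin : ∀ n, m ≤ n → w m / m * n ≤ w n := by
    intro n hn
    induction n, hn using Nat.le_induction with
    | base => exact le_of_eq (by field_simp)
    | succ k hk ih =>
      have hkR : (0 : ℝ) < k := by exact_mod_cast (lt_of_lt_of_le hm1 hk)
      have h1 := hratio k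
      have h2 := mul_le_mul_of_nonneg_left ih (by positivity : (0 : ℝ) ≤ (k : ℝ) + 1)
      push_cast
      refine le_of_mul_le_mul_left ?_ hkR
      linarith
  have hc : 0 < (w m / m) ^ 2 := by positivity
  have hle : (((w m / m) ^ 2 : ℝ) : EReal) ≤
      Filter.liminf (fun n : ℕ => ((ℓ n / ((n : ℝ) ^ 2 * σ0 n) : ℝ) : EReal)) Filter.atTop := by
    refine Filter.le_liminf_of_le (by isBoundedDefault) ?_
    filter_upwards [Filter.eventually_ge_atTop m] with n hn
    have hn1 : 1 ≤ n := hm1.trans hn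
    have hnR : (0 : ℝ) < n := by exact_mod_cast hn1
    have hs := hσ0 n hn1
    rw [EReal.coe_le_coe_iff, le_div_iff₀ (by positivity)]
    have h1 : (w m / m * n) ^ 2 ≤ w n ^ 2 := pow_le_pow_left₀ (by positivity) (hlin n hn) 2
    have h2 := mul_le_mul_of_nonneg_left h1 hs.le
    have h3 := hbd n hn1
    nlinarith
  rw [hliminf] at hle
  exact absurd (EReal.coe_le_coe_iff.mp hle) (not_le.mpr hc)

/-- Two positive roots of `l = t (s t + C)` for nonnegative `C` differ by at most half the
(normalised) change of `C`: the factor `2` comes from `l ≥ s · max(a, b)²`. -/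
lemma two_mul_abs_sub_le {l s a b C D E : ℝ} (hs : 0 < s) (ha : 0 < a) (hb : 0 < b)
    (hC : 0 ≤ C) (hD : 0 ≤ D) (hla : l = a * (s * a + C)) (hlb : l = b * (s * b + D))
    (hE : |C - D| ≤ s * E) : 2 * |a - b| ≤ E := by
  wlog h : b ≤ a generalizing a b C D
  · rw [abs_sub_comm]
    exact this hb ha hD hC hlb hla (by rwa [abs_sub_comm]) (le_of_not_ge h)
  rw [abs_of_nonneg (sub_nonneg.mpr h)]
  have hl : s * (a * b) ≤ l := by
    have h1 : s * (a * b) ≤ s * (a * a) := by gcongr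
    have h2 : 0 ≤ a * C := by positivity
    linarith
  have key : l * (a - b) = a * b * (s * (b - a) + (D - C)) := by
    linear_combination a * hlb - b * hla
  have h1 : s * (a * b) * (a - b) ≤ l * (a - b) :=
    mul_le_mul_of_nonneg_right hl (sub_nonneg.mpr h)
  have h2 : D - C ≤ s * E := by linarith [neg_abs_le (C - D)]
  have h3 : a * b * (D - C) ≤ a * b * (s * E) := mul_le_mul_of_nonneg_left h2 (by positivity)
  refine le_of_mul_le_mul_left ?_ (by positivity : 0 < s * (a * b))
  linarith

lemma mul_sub_sq_le {l s a b C D : ℝ} (hs : 0 < s) (ha : 0 < a) (hb : 0 < b)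
    (hC : 0 ≤ C) (hD : 0 ≤ D) (hla : l = a * (s * a + C)) (hlb : l = b * (s * b + D)) :
    s * |a - b| ^ 2 ≤ l := by
  rw [sq_abs]
  rcases le_total a b with h | h
  · have : (a - b) ^ 2 ≤ b ^ 2 := by nlinarith
    nlinarith [mul_le_mul_of_nonneg_left this hs.le, mul_nonneg hb.le hD]
  · have : (a - b) ^ 2 ≤ a ^ 2 := by nlinarith
    nlinarith [mul_le_mul_of_nonneg_left this hs.le, mul_nonneg ha.le hC]

/-- The positive root `t` of `l = t (s t + c)`, written so that it is visibly antitone in `c`. -/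
noncomputable def posRoot (l s c : ℝ) : ℝ := 2 * l / (c + √(c ^ 2 + 4 * s * l))

lemma posRoot_pos {l s c : ℝ} (hl : 0 < l) (hs : 0 < s) (hc : 0 ≤ c) : 0 < posRoot l s c := by
  unfold posRoot; positivity

lemma posRoot_spec {l s c : ℝ} (hl : 0 < l) (hs : 0 < s) (hc : 0 ≤ c) :
    l = posRoot l s c * (s * posRoot l s c + c) := by
  unfold posRoot
  have hq : √(c ^ 2 + 4 * s * l) ^ 2 = c ^ 2 + 4 * s * l := Real.sq_sqrt (by positivity)
  have hpos : 0 < c + √(c ^ 2 + 4 * s * l) := by positivity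
  generalize √(c ^ 2 + 4 * s * l) = q at *
  field_simp
  linear_combination hq

lemma posRoot_anti {l s c d : ℝ} (hl : 0 < l) (hs : 0 < s) (hc : 0 ≤ c) (hcd : c ≤ d) :
    posRoot l s d ≤ posRoot l s c := by
  unfold posRoot
  gcongr

lemma posRoot_le {l s c : ℝ} (hl : 0 < l) (hs : 0 < s) (hc : 0 ≤ c) :
    posRoot l s c ≤ √(l / s) := by
  have h := posRoot_spec hl hs hc
  have hp := posRoot_pos hl hs hc
  apply Real.le_sqrt_of_sq_le
  rw [le_div_iff₀ hs]
  nlinarith [mul_nonneg hp.le hc]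

/-- Knaster–Tarski on the box `[0, M]` of real sequences. -/
lemma exists_fixed_of_monotone (M : ℕ → ℝ) (hM : 0 ≤ M) (G : (ℕ → ℝ) → (ℕ → ℝ))
    (hmaps : ∀ x ∈ Set.Icc 0 M, G x ∈ Set.Icc 0 M)
    (hmono : ∀ x ∈ Set.Icc 0 M, ∀ y ∈ Set.Icc 0 M, x ≤ y → G x ≤ G y) :
    ∃ a ∈ Set.Icc 0 M, G a = a := by
  have : Fact ((0 : ℕ → ℝ) ≤ M) := ⟨hM⟩
  let Gbox : Set.Icc (0 : ℕ → ℝ) M →o Set.Icc (0 : ℕ → ℝ) M :=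
    ⟨fun x => ⟨G x, hmaps x x.2⟩, fun x y hxy => hmono x x.2 y y.2 hxy⟩
  exact ⟨(OrderHom.lfp Gbox).1, (OrderHom.lfp Gbox).2, congrArg Subtype.val Gbox.map_lfp⟩

/-- Corollary (existence and uniqueness): if `max(σₙ₋₁, σₙ₁) ≤ σₙ₀`, `κₙ ≥ 0`,
`liminf ℓₙ/(n² σₙ₀) = 0`, and `σ₁,₋₁ x₀ ≥ −κ₁`, then there exists a unique `x₁ > 0`
such that the sequence determined by `x₀`, `x₁` and the equation
`ℓₙ = xₙ (σₙ₁ xₙ₊₁ + σₙ₀ xₙ + σₙ₋₁ xₙ₋₁) + κₙ xₙ` is positive. -/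
theorem stmt6 (ℓ σ1 σ0 σm1 κ : ℕ → ℝ) (x₀ : ℝ)
    (hℓ : ∀ n : ℕ, 1 ≤ n → 0 < ℓ n)
    (hσ0 : ∀ n : ℕ, 1 ≤ n → 0 < σ0 n)
    (hσ1 : ∀ n : ℕ, 1 ≤ n → 0 ≤ σ1 n)
    (hσm1 : ∀ n : ℕ, 1 ≤ n → 0 ≤ σm1 n)
    (hκ : ∀ n : ℕ, 1 ≤ n → 0 ≤ κ n)
    (hmax : ∀ n : ℕ, 1 ≤ n → max (σm1 n) (σ1 n) ≤ σ0 n)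
    (hliminf :
      Filter.liminf (fun n : ℕ => ((ℓ n / ((n : ℝ) ^ 2 * σ0 n) : ℝ) : EReal))
        Filter.atTop = 0)
    (hx₀ : σm1 1 * x₀ ≥ -κ 1) :
    ∃! x₁ : ℝ, 0 < x₁ ∧
      ∃ x : ℕ → ℝ, x 0 = x₀ ∧ x 1 = x₁ ∧
        (∀ n : ℕ, 1 ≤ n →
          ℓ n = x n * (σ1 n * x (n + 1) + σ0 n * x n + σm1 n * x (n - 1)) + κ n * x n) ∧
        (∀ n : ℕ, 1 ≤ n → 0 < x n) := by
  have hm1 : ∀ n, 1 ≤ n → σm1 n ≤ σ0 n := fun n hn => (le_max_left _ _).trans (hmax n hn)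
  have h1 : ∀ n, 1 ≤ n → σ1 n ≤ σ0 n := fun n hn => (le_max_right _ _).trans (hmax n hn)
  -- the linear coefficient of the quadratic for `xₙ`; the value at `0` is always read as `x₀`
  let c : (ℕ → ℝ) → ℕ → ℝ := fun x n =>
    σ1 n * x (n + 1) + σm1 n * Function.update x 0 x₀ (n - 1) + κ n
  have hc0 : ∀ x : ℕ → ℝ, (∀ n, 1 ≤ n → 0 ≤ x n) → ∀ n, 1 ≤ n → 0 ≤ c x n := by
    intro x hx n hn
    have h2 : 0 ≤ σ1 n * x (n + 1) := mul_nonneg (hσ1 n hn) (hx _ (by omega))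
    rcases Nat.lt_or_ge 1 n with h | h
    · have h3 : 0 ≤ σm1 n * x (n - 1) := mul_nonneg (hσm1 n hn) (hx _ (by omega))
      have h4 := hκ n hn
      simp only [c, Function.update_of_ne (show n - 1 ≠ 0 by omega)]
      linarith
    · obtain rfl : n = 1 := le_antisymm h hn
      simp only [c, Nat.sub_self, Function.update_self]
      linarith
  have hcmono : ∀ x y : ℕ → ℝ, x ≤ y → ∀ n, 1 ≤ n → c x n ≤ c y n := by
    intro x y hxy n hn
    have h2 := mul_le_mul_of_nonneg_left (hxy (n + 1)) (hσ1 n hn)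
    have h3 : Function.update x 0 x₀ (n - 1) ≤ Function.update y 0 x₀ (n - 1) :=
      (update_le_update_iff.mpr ⟨le_rfl, fun j _ => hxy j⟩ :
        Function.update x 0 x₀ ≤ Function.update y 0 x₀) (n - 1)
    have h4 := mul_le_mul_of_nonneg_left h3 (hσm1 n hn)
    simp only [c]
    linarith
  -- `p`, `q` are the sequences of neighbours used for `a`, `b`; they are `(b, a)` for existence
  -- and `(a, b)` for uniqueness
  have compare : ∀ a b p q : ℕ → ℝ, (∀ n, 1 ≤ n → 0 < a n) → (∀ n, 1 ≤ n → 0 < b n) →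
      (∀ n, 1 ≤ n → 0 ≤ p n) → (∀ n, 1 ≤ n → 0 ≤ q n) →
      (∀ n, |p n - q n| = |a n - b n|) →
      (∀ n, 1 ≤ n → ℓ n = a n * (σ0 n * a n + c p n)) →
      (∀ n, 1 ≤ n → ℓ n = b n * (σ0 n * b n + c q n)) →
      a 0 = b 0 → ∀ n, a n = b n := by
    intro a b p q ha hb hp hq hpq hea heb hab n
    refine sub_eq_zero.mp (abs_eq_zero.mp ?_)
    refine eq_zero_of_convex_of_liminf ℓ σ0 (fun n => |a n - b n|) hσ0 hliminf (by simp [hab])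
      (fun n => abs_nonneg _) ?_ ?_ n
    · intro k
      have hk : 1 ≤ k + 1 := by omega
      refine two_mul_abs_sub_le (hσ0 _ hk) (ha _ hk) (hb _ hk) (hc0 p hp _ hk) (hc0 q hq _ hk)
        (hea _ hk) (heb _ hk) ?_
      have hupd : |Function.update p 0 x₀ k - Function.update q 0 x₀ k| ≤ |a k - b k| := by
        rcases Nat.eq_zero_or_pos k with rfl | h
        · simp
        · rw [Function.update_of_ne h.ne', Function.update_of_ne h.ne', hpq]
      have heq : c p (k + 1) - c q (k + 1) = σ1 (k + 1) * (p (k + 2) - q (k + 2)) +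
          σm1 (k + 1) * (Function.update p 0 x₀ k - Function.update q 0 x₀ k) := by
        simp only [c, Nat.add_sub_cancel]
        ring
      rw [heq, mul_add]
      refine (abs_add_le _ _).trans (add_le_add ?_ ?_)
      · rw [abs_mul, abs_of_nonneg (hσ1 _ hk), hpq]
        exact mul_le_mul_of_nonneg_right (h1 _ hk) (abs_nonneg _)
      · rw [abs_mul, abs_of_nonneg (hσm1 _ hk)]
        exact mul_le_mul (hm1 _ hk) hupd (abs_nonneg _) (hσ0 _ hk).le
    · intro k hk
      exact mul_sub_sq_le (hσ0 _ hk) (ha _ hk) (hb _ hk) (hc0 p hp _ hk) (hc0 q hq _ hk)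
        (hea _ hk) (heb _ hk)
  -- existence of a fixed point of `T`
  obtain ⟨a, ha, hea⟩ : ∃ a : ℕ → ℝ, (∀ n, 1 ≤ n → 0 < a n) ∧
      ∀ n, 1 ≤ n → ℓ n = a n * (σ0 n * a n + c a n) := by
    let T : (ℕ → ℝ) → ℕ → ℝ := fun x n => if n = 0 then 0 else posRoot (ℓ n) (σ0 n) (c x n)
    let M : ℕ → ℝ := fun n => √(ℓ n / σ0 n)
    have hT : ∀ x n, 1 ≤ n → T x n = posRoot (ℓ n) (σ0 n) (c x n) := fun x n hn =>
      if_neg (by omega)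
    have hTmaps : ∀ x ∈ Set.Icc 0 M, T x ∈ Set.Icc 0 M := by
      intro x hx
      have hcn := hc0 x (fun n _ => hx.1 n)
      refine ⟨fun n => ?_, fun n => ?_⟩ <;> rcases Nat.eq_zero_or_pos n with rfl | hn
      · simp [T]
      · rw [hT x n hn]
        exact (posRoot_pos (hℓ n hn) (hσ0 n hn) (hcn n hn)).le
      · simp [T, M]
      · rw [hT x n hn]
        exact posRoot_le (hℓ n hn) (hσ0 n hn) (hcn n hn)
    have hTanti : ∀ x ∈ Set.Icc 0 M, ∀ y ∈ Set.Icc 0 M, x ≤ y → T y ≤ T x := by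
      intro x hx y hy hxy n
      rcases Nat.eq_zero_or_pos n with rfl | hn
      · simp [T]
      · rw [hT x n hn, hT y n hn]
        exact posRoot_anti (hℓ n hn) (hσ0 n hn) (hc0 x (fun n _ => hx.1 n) n hn)
          (hcmono x y hxy n hn)
    obtain ⟨a, haM, hfix⟩ := exists_fixed_of_monotone M (fun n => Real.sqrt_nonneg _)
      (fun x => T (T x)) (fun x hx => hTmaps _ (hTmaps x hx))
      (fun x hx y hy hxy => hTanti _ (hTmaps y hy) _ (hTmaps x hx) (hTanti x hx y hy hxy))
    have hbM := hTmaps a haM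
    have hposT : ∀ x ∈ Set.Icc 0 M, ∀ n, 1 ≤ n → 0 < T x n := by
      intro x hx n hn
      rw [hT x n hn]
      exact posRoot_pos (hℓ n hn) (hσ0 n hn) (hc0 x (fun n _ => hx.1 n) n hn)
    have hspecT : ∀ x ∈ Set.Icc 0 M, ∀ n, 1 ≤ n →
        ℓ n = T x n * (σ0 n * T x n + c x n) := by
      intro x hx n hn
      rw [hT x n hn]
      exact posRoot_spec (hℓ n hn) (hσ0 n hn) (hc0 x (fun n _ => hx.1 n) n hn)
    have heq := compare (T (T a)) (T a) (T a) a (hposT _ hbM) (hposT _ haM)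
      (fun n _ => hbM.1 n) (fun n _ => haM.1 n)
      (fun n => by rw [show T (T a) = a from hfix, abs_sub_comm])
      (hspecT _ hbM) (hspecT _ haM) (by simp [T])
    have heq' : T a = a := by
      rw [← show T (T a) = T a from funext heq]; exact hfix
    refine ⟨a, fun n hn => ?_, fun n hn => ?_⟩
    · have := hposT a haM n hn
      rwa [heq'] at this
    · have := hspecT a haM n hn
      rwa [heq'] at this
  refine ⟨a 1, ⟨ha 1 le_rfl, Function.update a 0 x₀, by simp, by simp, ?_, ?_⟩, ?_⟩
  · intro n hn
    rw [Function.update_of_ne (show n ≠ 0 by omega),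
      Function.update_of_ne (show n + 1 ≠ 0 by omega)]
    refine (hea n hn).trans ?_
    simp only [c]
    ring
  · intro n hn
    rw [Function.update_of_ne (show n ≠ 0 by omega)]
    exact ha n hn
  · rintro y₁ ⟨-, y, hy0, rfl, hy, hypos⟩
    have hupd : Function.update y 0 x₀ = y := by rw [← hy0, Function.update_eq_self]
    -- the entry of `a` at `0` plays no role, so it is replaced by that of `y`
    have hca : ∀ n, c (Function.update a 0 x₀) n = c a n := by
      intro n
      simp only [c, Function.update_idem, Function.update_of_ne (Nat.succ_ne_zero n)]
    have hne : ∀ n, 1 ≤ n → Function.update a 0 x₀ n = a n := fun n hn =>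
      Function.update_of_ne (show n ≠ 0 by omega) _ _
    have hapos : ∀ n, 1 ≤ n → 0 < Function.update a 0 x₀ n := fun n hn => by
      rw [hne n hn]; exact ha n hn
    have := compare y (Function.update a 0 x₀) y (Function.update a 0 x₀) hypos hapos
      (fun n hn => (hypos n hn).le) (fun n hn => (hapos n hn).le) (fun n => rfl)
      (fun n hn => by
        refine (hy n hn).trans ?_
        simp only [c, hupd]
        ring)
      (fun n hn => by rw [hca, hne n hn]; exact hea n hn)
      (by simp [hy0]) 1
    rw [this, hne 1 le_rfl]
end

section
/- Suppose ℓ_n > 0, σ_{n,0} > 0, σ_{n,1} ≥ 0, σ_{n,-1} ≥ 0, κ_n ∈ ℝ for all n ≥ 1, and the coefficients satisfy liminf_{n→∞} σ_{n,0} > 0, limsup_{n→∞} σ_{n,1}√(ℓ_{n+1}/ℓ_n) < ∞, limsup_{n→∞} σ_{n,-1}√(ℓ_{n-1}/ℓ_n) < ∞, and limsup_{n→∞} |κ_n|/√ℓ_n < ∞. If a real sequence (x_n)_{n≥0} satisfies ℓ_n = x_n (σ_{n,1} x_{n+1} + σ_{n,0} x_n + σ_{n,-1} x_{n-1}) + κ_n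 x_n for all n ≥ 1, then liminf_{n→∞} x_n/√ℓ_n > −∞ if and only if limsup_{n→∞} x_n/√ℓ_n < ∞. -/
/-!
Put `yₙ = xₙ / √ℓₙ`. Dividing the recurrence by `ℓₙ` gives
`1 = yₙ (aₙ yₙ₊₁ + sₙ yₙ + bₙ yₙ₋₁ + kₙ)`, where eventually `0 ≤ aₙ, bₙ ≤ A`, `|kₙ| ≤ K` and
`sₙ ≥ c > 0`. If `yₙ ≥ -M` eventually and `yₙ ≥ 1`, then
`1 ≥ 1 / yₙ ≥ c yₙ - 2 A M - K`, which bounds `yₙ` from above (`bddAbove_of_bddBelow`).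
The normalized equation is invariant under `(y, k) ↦ (-y, -k)`, so the same lemma yields the
converse.
-/

open Filter

lemma limsup_coe_lt_top_iff (u : ℕ → ℝ) :
    limsup (fun n => (u n : EReal)) atTop < ⊤ ↔ ∃ B : ℝ, ∀ᶠ n in atTop, u n ≤ B := by
  constructor
  · intro h
    obtain ⟨B, hB, -⟩ := EReal.lt_iff_exists_real_btwn.1 h
    refine ⟨B, (eventually_lt_of_limsup_lt hB).mono fun n hn => ?_⟩
    exact (EReal.coe_lt_coe_iff.1 hn).le
  · rintro ⟨B, hB⟩
    refine lt_of_le_of_lt (limsup_le_of_le (a := (B : EReal)) (by isBoundedDefault) ?_)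
      (EReal.coe_lt_top B)
    exact hB.mono fun n hn => EReal.coe_le_coe_iff.2 hn

lemma bot_lt_liminf_coe_iff (u : ℕ → ℝ) :
    ⊥ < liminf (fun n => (u n : EReal)) atTop ↔ ∃ B : ℝ, ∀ᶠ n in atTop, B ≤ u n := by
  constructor
  · intro h
    obtain ⟨B, -, hB⟩ := EReal.lt_iff_exists_real_btwn.1 h
    refine ⟨B, (eventually_lt_of_lt_liminf hB).mono fun n hn => ?_⟩
    exact (EReal.coe_lt_coe_iff.1 hn).le
  · rintro ⟨B, hB⟩
    refine lt_of_lt_of_le (EReal.bot_lt_coe B)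
      (le_liminf_of_le (a := (B : EReal)) (by isBoundedDefault) ?_)
    exact hB.mono fun n hn => EReal.coe_le_coe_iff.2 hn

/-- For the normalized recurrence, an eventual lower bound forces an eventual upper bound. -/
lemma bddAbove_of_bddBelow (a s b k y : ℕ → ℝ) {c A A' K : ℝ} (hc : 0 < c)
    (hs : ∀ᶠ n in atTop, c ≤ s n)
    (ha0 : ∀ᶠ n in atTop, 0 ≤ a n) (ha : ∀ᶠ n in atTop, a n ≤ A)
    (hb0 : ∀ᶠ n in atTop, 0 ≤ b n) (hb : ∀ᶠ n in atTop, b n ≤ A')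
    (hk : ∀ᶠ n in atTop, |k n| ≤ K)
    (heq : ∀ᶠ n in atTop, 1 = y n * (a n * y (n + 1) + s n * y n + b n * y (n - 1) + k n))
    (hy : ∃ m : ℝ, ∀ᶠ n in atTop, m ≤ y n) :
    ∃ B : ℝ, ∀ᶠ n in atTop, y n ≤ B := by
  obtain ⟨m, hm⟩ := hy
  -- A nonnegative `M` makes `-M * A` a lower bound for `a n * y (n + 1)`.
  obtain ⟨M, hM0, hM⟩ : ∃ M : ℝ, 0 ≤ M ∧ ∀ᶠ n in atTop, -M ≤ y n :=
    ⟨|m|, abs_nonneg m, hm.mono fun n hn => (neg_abs_le m).trans hn⟩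
  refine ⟨max 1 ((1 + A * M + A' * M + K) / c), ?_⟩
  filter_upwards [hs, ha0, ha, hb0, hb, hk, heq, (tendsto_add_atTop_nat 1).eventually hM,
    (tendsto_sub_atTop_nat 1).eventually hM] with n hs ha0 ha hb0 hb hk heq hp hq
  rcases le_or_gt (y n) 1 with h1 | h1
  · exact h1.trans (le_max_left _ _)
  · refine le_trans ?_ (le_max_right _ _)
    rw [le_div_iff₀ hc]
    have hle : a n * y (n + 1) + s n * y n + b n * y (n - 1) + k n ≤ 1 := by
      by_contra! h
      nlinarith
    have h2 : -(A * M) ≤ a n * y (n + 1) := by nlinarith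
    have h3 : -(A' * M) ≤ b n * y (n - 1) := by nlinarith
    have h4 : c * y n ≤ s n * y n := by nlinarith
    have h5 := (abs_le.1 hk).1
    linarith

/-- Boundedness theorem: under the stated coefficient conditions, any solution of
`ℓₙ = xₙ (σₙ₁ xₙ₊₁ + σₙ₀ xₙ + σₙ₋₁ xₙ₋₁) + κₙ xₙ` satisfies
`liminf xₙ/√ℓₙ > −∞ ⟺ limsup xₙ/√ℓₙ < ∞`. -/
theorem stmt7 (ℓ σ1 σ0 σm1 κ : ℕ → ℝ) (x : ℕ → ℝ)
    (hℓ0 : 0 < ℓ 0)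
    (hℓ : ∀ n : ℕ, 1 ≤ n → 0 < ℓ n)
    (hσ0 : ∀ n : ℕ, 1 ≤ n → 0 < σ0 n)
    (hσ1 : ∀ n : ℕ, 1 ≤ n → 0 ≤ σ1 n)
    (hσm1 : ∀ n : ℕ, 1 ≤ n → 0 ≤ σm1 n)
    (hliminfσ0 : 0 < Filter.liminf (fun n : ℕ => ((σ0 n : ℝ) : EReal)) Filter.atTop)
    (hlimsup1 :
      Filter.limsup
        (fun n : ℕ => ((σ1 n * Real.sqrt (ℓ (n + 1) / ℓ n) : ℝ) : EReal))
        Filter.atTop < ⊤)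
    (hlimsupm1 :
      Filter.limsup
        (fun n : ℕ => ((σm1 n * Real.sqrt (ℓ (n - 1) / ℓ n) : ℝ) : EReal))
        Filter.atTop < ⊤)
    (hlimsupκ :
      Filter.limsup (fun n : ℕ => ((|κ n| / Real.sqrt (ℓ n) : ℝ) : EReal))
        Filter.atTop < ⊤)
    (heq : ∀ n : ℕ, 1 ≤ n →
      ℓ n = x n * (σ1 n * x (n + 1) + σ0 n * x n + σm1 n * x (n - 1)) + κ n * x n) :
    (⊥ < Filter.liminf (fun n : ℕ => ((x n / Real.sqrt (ℓ n) : ℝ) : EReal)) Filter.atTop ↔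
      Filter.limsup (fun n : ℕ => ((x n / Real.sqrt (ℓ n) : ℝ) : EReal)) Filter.atTop < ⊤) := by
  have hpos : ∀ n, 0 < ℓ n := fun n => by
    rcases Nat.eq_zero_or_pos n with rfl | h
    · exact hℓ0
    · exact hℓ n h
  rw [limsup_coe_lt_top_iff] at hlimsup1 hlimsupm1 hlimsupκ
  rw [limsup_coe_lt_top_iff, bot_lt_liminf_coe_iff]
  obtain ⟨A, ha⟩ := hlimsup1
  obtain ⟨A', hb⟩ := hlimsupm1
  obtain ⟨K, hk⟩ := hlimsupκ
  obtain ⟨c, hc, hcl⟩ := EReal.lt_iff_exists_real_btwn.1 hliminfσ0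
  have hc : 0 < c := by exact_mod_cast hc
  have hs : ∀ᶠ n in atTop, c ≤ σ0 n :=
    (eventually_lt_of_lt_liminf hcl).mono fun n hn => (EReal.coe_lt_coe_iff.1 hn).le
  have ha0 : ∀ᶠ n in atTop, 0 ≤ σ1 n * √(ℓ (n + 1) / ℓ n) :=
    (eventually_ge_atTop 1).mono fun n hn => mul_nonneg (hσ1 n hn) (Real.sqrt_nonneg _)
  have hb0 : ∀ᶠ n in atTop, 0 ≤ σm1 n * √(ℓ (n - 1) / ℓ n) :=
    (eventually_ge_atTop 1).mono fun n hn => mul_nonneg (hσm1 n hn) (Real.sqrt_nonneg _)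
  have hk1 : ∀ᶠ n in atTop, |κ n / √(ℓ n)| ≤ K := hk.mono fun n hn => by
    rwa [abs_div, abs_of_nonneg (Real.sqrt_nonneg _)]
  have hk2 : ∀ᶠ n in atTop, |-(κ n / √(ℓ n))| ≤ K := hk1.mono fun n hn => by
    rwa [abs_neg]
  have hnorm : ∀ᶠ n in atTop, 1 = x n / √(ℓ n) *
      (σ1 n * √(ℓ (n + 1) / ℓ n) * (x (n + 1) / √(ℓ (n + 1))) + σ0 n * (x n / √(ℓ n))
        + σm1 n * √(ℓ (n - 1) / ℓ n) * (x (n - 1) / √(ℓ (n - 1))) + κ n / √(ℓ n)) := by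
    filter_upwards [eventually_ge_atTop 1] with n hn
    have e := heq n hn
    rw [Real.sqrt_div (hpos _).le, Real.sqrt_div (hpos _).le]
    have h0 := Real.sqrt_pos.2 (hpos n)
    have h1 := Real.sqrt_pos.2 (hpos (n + 1))
    have h2 := Real.sqrt_pos.2 (hpos (n - 1))
    have hsq := Real.sq_sqrt (hpos n).le
    rw [← hsq] at e
    field_simp
    linear_combination e
  constructor
  · exact bddAbove_of_bddBelow _ _ _ _ (fun n => x n / √(ℓ n)) hc hs ha0 ha hb0 hb hk1 hnorm
  · rintro ⟨B, hB⟩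
    obtain ⟨C, hC⟩ := bddAbove_of_bddBelow _ _ _ _ (fun n => -(x n / √(ℓ n))) hc hs ha0 ha hb0 hb
      hk2 (hnorm.mono fun n hn => by linear_combination hn)
      ⟨-B, hB.mono fun n hn => neg_le_neg hn⟩
    exact ⟨-C, hC.mono fun n hn => neg_le.1 hn⟩
end

section
/- Let n ≥ 2, ℓ_n > 0, σ_{n,0} > 0, σ_{n,1} ≥ 0, σ_{n,-1} ≥ 0, κ_n ∈ ℝ, set σ_n := max(σ_{n,-1}, σ_{n,1}), and assume σ_n ≤ σ_{n,0} < 2σ_n and −2(σ_{n,0} − σ_n)√ℓ_n ≤ κ_n √(2σ_n − σ_{n,0}). If x_{n-1} ≥ 0, x_n > 0, x_{n+1} ≥ 0 are real numbers with ℓ_n = x_n (σ_{n,1} x_{n+1} + σ_{n,0} x_n + σ_{n,-1} x_{n-1}) + κ_n x_n, then x_n ≤ √ℓ_n / √(2σ_n − σ_{n,0}). -/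
/-!
Put `a = √ℓₙ`, `b = √(2σₙ − σₙ₀)` and `d = σₙ₀ − σₙ ≥ 0`, so that `σₙ₀ = b² + 2d`. Dropping the
nonnegative neighbor terms gives `σₙ₀ xₙ² + κₙ xₙ ≤ a²`. Multiplying by `b` and using
`−2 d a ≤ κₙ b`, this becomes `(b xₙ − a) (b (b xₙ + a) + 2 d xₙ) ≤ 0`, where the second factor is
positive; hence `b xₙ ≤ a`.
-/

/-- A priori bound under condition (✧) for `n ≥ 2`: if `σₙ ≤ σₙ₀ < 2σₙ` (where
`σₙ := max(σₙ₋₁, σₙ₁)`) and `−2(σₙ₀ − σₙ)√ℓₙ ≤ κₙ√(2σₙ − σₙ₀)`, then any positive term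
`xₙ` of a solution with nonnegative neighbors satisfies `xₙ ≤ √ℓₙ/√(2σₙ − σₙ₀)`. -/
theorem stmt13 (n : ℕ) (hn : 2 ≤ n) (ℓn σ1 σ0 σm1 κn : ℝ)
    (hℓ : 0 < ℓn) (hσ0 : 0 < σ0) (hσ1 : 0 ≤ σ1) (hσm1 : 0 ≤ σm1)
    (hlow : max σm1 σ1 ≤ σ0) (hhigh : σ0 < 2 * max σm1 σ1)
    (hκ : -2 * (σ0 - max σm1 σ1) * Real.sqrt ℓn ≤ κn * Real.sqrt (2 * max σm1 σ1 - σ0))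
    (xnm1 xn xnp1 : ℝ) (hxnm1 : 0 ≤ xnm1) (hxn : 0 < xn) (hxnp1 : 0 ≤ xnp1)
    (heq : ℓn = xn * (σ1 * xnp1 + σ0 * xn + σm1 * xnm1) + κn * xn) :
    xn ≤ Real.sqrt ℓn / Real.sqrt (2 * max σm1 σ1 - σ0) := by
  generalize max σm1 σ1 = σ at *
  have hb : 0 < Real.sqrt (2 * σ - σ0) := Real.sqrt_pos.mpr (by linarith)
  have hb2 : Real.sqrt (2 * σ - σ0) ^ 2 = 2 * σ - σ0 := Real.sq_sqrt (by linarith)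
  have ha : 0 < Real.sqrt ℓn := Real.sqrt_pos.mpr hℓ
  have ha2 : Real.sqrt ℓn ^ 2 = ℓn := Real.sq_sqrt hℓ.le
  generalize Real.sqrt (2 * σ - σ0) = b at *
  generalize Real.sqrt ℓn = a at *
  rw [le_div_iff₀ hb]
  by_contra! hlt
  have hquad : σ0 * xn ^ 2 + κn * xn ≤ a ^ 2 := by
    have h1 : 0 ≤ xn * (σ1 * xnp1) := by positivity
    have h2 : 0 ≤ xn * (σm1 * xnm1) := by positivity
    nlinarith
  have hmul : b * (σ0 * xn ^ 2) + (-2 * (σ0 - σ) * a) * xn ≤ b * a ^ 2 := by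
    nlinarith [mul_le_mul_of_nonneg_left hquad hb.le, mul_le_mul_of_nonneg_right hκ hxn.le]
  have hd : 0 ≤ σ0 - σ := by linarith
  have hpos : 0 < (xn * b - a) * (b * (b * xn + a) + 2 * (σ0 - σ) * xn) :=
    mul_pos (by linarith) (by positivity)
  -- Here `σ0 = b ^ 2 + 2 * (σ0 - σ)`, which makes the quadratic in `hmul` factor as in `hpos`.
  have hfac : (xn * b - a) * (b * (b * xn + a) + 2 * (σ0 - σ) * xn)
      = b * (σ0 * xn ^ 2) + (-2 * (σ0 - σ) * a) * xn - b * a ^ 2 := by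
    linear_combination (b * xn ^ 2) * hb2
  linarith
end

section
/- Let ℓ₁ > 0, σ_{1,0} > 0, σ_{1,1} ≥ 0, σ_{1,-1} ≥ 0, κ₁ ∈ ℝ, x_0 ∈ ℝ, set σ₁ := max(σ_{1,-1}, σ_{1,1}), and assume σ₁ ≤ σ_{1,0} < 2σ₁ and −2(σ_{1,0} − σ₁)√ℓ₁ ≤ (σ_{1,-1} x_0 + κ₁)√(2σ₁ − σ_{1,0}). If x_1 > 0 and x_2 ≥ 0 are real numbers with ℓ₁ = x_1 (σ_{1,1} x_2 + σ_{1,0} x_1 + σ_{1,-1} x_0) + κ₁ x_1, then x_1 ≤ √ℓ₁ / √(2σ₁ − σ_{1,0}). -/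
/-!
Write `s = √ℓ₁`, `d = √(2σ₁ - σ₁,₀)` and `c = σ₁,₋₁ x₀ + κ₁`. As `x₂ ≥ 0`, the equation gives
`σ₁,₀ x₁² + c x₁ ≤ s²`. Multiplying by `d` and using `c d ≥ -2 (σ₁,₀ - σ₁) s` together with
`σ₁,₀ = d² + 2 (σ₁,₀ - σ₁)` yields
`2 (σ₁,₀ - σ₁) x₁ (d x₁ - s) ≤ d (s² - (d x₁)²)`.
If `d x₁ > s`, the left side is nonnegative and the right side is negative, which is absurd.
-/

/-- A priori bound under condition (✧) at `n = 1`: if `σ₁ ≤ σ₁,₀ < 2σ₁` (where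
`σ₁ := max(σ₁,₋₁, σ₁,₁)`) and `−2(σ₁,₀ − σ₁)√ℓ₁ ≤ (σ₁,₋₁ x₀ + κ₁)√(2σ₁ − σ₁,₀)`,
then `x₁ ≤ √ℓ₁/√(2σ₁ − σ₁,₀)`. -/
theorem stmt14 (ℓ1 σ11 σ10 σ1m1 κ1 x0 : ℝ)
    (hℓ : 0 < ℓ1) (hσ10 : 0 < σ10) (hσ11 : 0 ≤ σ11) (hσ1m1 : 0 ≤ σ1m1)
    (hlow : max σ1m1 σ11 ≤ σ10) (hhigh : σ10 < 2 * max σ1m1 σ11)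
    (hκ : -2 * (σ10 - max σ1m1 σ11) * Real.sqrt ℓ1 ≤
      (σ1m1 * x0 + κ1) * Real.sqrt (2 * max σ1m1 σ11 - σ10))
    (x1 x2 : ℝ) (hx1 : 0 < x1) (hx2 : 0 ≤ x2)
    (heq : ℓ1 = x1 * (σ11 * x2 + σ10 * x1 + σ1m1 * x0) + κ1 * x1) :
    x1 ≤ Real.sqrt ℓ1 / Real.sqrt (2 * max σ1m1 σ11 - σ10) := by
  generalize max σ1m1 σ11 = σ at *
  have hd : 0 < √(2 * σ - σ10) := Real.sqrt_pos.mpr (by linarith)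
  have hd2 : √(2 * σ - σ10) ^ 2 = 2 * σ - σ10 := Real.sq_sqrt (by linarith)
  have hs : 0 < √ℓ1 := Real.sqrt_pos.mpr hℓ
  have hs2 : √ℓ1 ^ 2 = ℓ1 := Real.sq_sqrt hℓ.le
  generalize √(2 * σ - σ10) = d at *
  generalize √ℓ1 = s at *
  rw [le_div_iff₀ hd]
  by_contra! h
  -- Discarding the nonnegative term `σ11 * x1 * x2` leaves a quadratic inequality in `x1`.
  have hquad : σ10 * x1 ^ 2 + (σ1m1 * x0 + κ1) * x1 ≤ s ^ 2 := by
    have : 0 ≤ x1 * (σ11 * x2) := by positivity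
    nlinarith
  have hlin : -2 * (σ10 - σ) * s * x1 ≤ (σ1m1 * x0 + κ1) * d * x1 :=
    mul_le_mul_of_nonneg_right hκ hx1.le
  have hσ : σ10 = d ^ 2 + 2 * (σ10 - σ) := by linarith
  have hmain : 2 * (σ10 - σ) * x1 * (x1 * d - s) ≤ d * (s ^ 2 - (x1 * d) ^ 2) := by
    have h1 := mul_le_mul_of_nonneg_left hquad hd.le
    have h2 : d * (σ10 * x1 ^ 2) = d * ((d ^ 2 + 2 * (σ10 - σ)) * x1 ^ 2) := by rw [← hσ]
    linarith
  have hleft : 0 ≤ 2 * (σ10 - σ) * x1 * (x1 * d - s) :=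
    mul_nonneg (mul_nonneg (by linarith) hx1.le) (by linarith)
  have hright : d * (s ^ 2 - (x1 * d) ^ 2) < 0 :=
    mul_neg_of_pos_of_neg hd (by nlinarith)
  linarith
end

section
/- Let n ≥ 2, ℓ_n > 0, σ_{n,0} > 0, σ_{n,1} ≥ 0, σ_{n,-1} ≥ 0, κ_n ∈ ℝ. If u_{n-1}, u_n, u_{n+1} > 0 and v_{n-1}, v_n, v_{n+1} > 0 both satisfy ℓ_n = y_n (σ_{n,1} y_{n+1} + σ_{n,0} y_n + σ_{n,-1} y_{n-1}) + κ_n y_n (with y = u and y = v respectively), then (u_n − v_n)² ≤ 8 (ℓ_n/σ_{n,0} + (κ_n⁻)²/σ_{n,0}²), where κ_n⁻ := (|κ_n| − κ_n)/2. -/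
/-! For a positive solution, dropping the nonnegative neighbour terms leaves
`σ₀ y² ≤ ℓ + κ⁻ y`. Dividing by `σ₀` and absorbing the linear term with
`2 (κ⁻/σ₀) y ≤ (κ⁻/σ₀)² + y²` gives `y² ≤ 2 ℓ/σ₀ + (κ⁻/σ₀)²`. Since both solutions are positive,
`(u - v)² ≤ u² + v²`, which is within the claimed bound. -/

/-- The a priori bound on the middle term of a single positive solution. -/
lemma sq_le_of_solution {ℓ σ1 σ0 σm1 κ ym1 y yp1 : ℝ}
    (hσ0 : 0 < σ0) (hσ1 : 0 ≤ σ1) (hσm1 : 0 ≤ σm1)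
    (hym1 : 0 < ym1) (hy : 0 < y) (hyp1 : 0 < yp1)
    (heq : ℓ = y * (σ1 * yp1 + σ0 * y + σm1 * ym1) + κ * y) :
    y ^ 2 ≤ 2 * (ℓ / σ0) + ((|κ| - κ) / 2 / σ0) ^ 2 := by
  have h1 : 0 ≤ y * (σ1 * yp1) := by positivity
  have h2 : 0 ≤ y * (σm1 * ym1) := by positivity
  have hk : -κ * y ≤ (|κ| - κ) / 2 * y :=
    mul_le_mul_of_nonneg_right (by linarith [neg_abs_le κ]) hy.le
  have h3 : y ^ 2 ≤ (ℓ + (|κ| - κ) / 2 * y) / σ0 := by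
    rw [le_div_iff₀ hσ0]
    nlinarith
  have h4 : (ℓ + (|κ| - κ) / 2 * y) / σ0 = ℓ / σ0 + (|κ| - κ) / 2 / σ0 * y := by ring
  nlinarith [sq_nonneg ((|κ| - κ) / 2 / σ0 - y)]

/-- Bound on the difference of the `n`-th terms of two positive solutions (`n ≥ 2`):
`(uₙ − vₙ)² ≤ 8(ℓₙ/σₙ₀ + (κₙ⁻)²/σₙ₀²)`, where `κ⁻ := (|κ| − κ)/2`. -/
theorem stmt15 (n : ℕ) (hn : 2 ≤ n) (ℓn σ1 σ0 σm1 κn : ℝ)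
    (hℓ : 0 < ℓn) (hσ0 : 0 < σ0) (hσ1 : 0 ≤ σ1) (hσm1 : 0 ≤ σm1)
    (unm1 un unp1 vnm1 vn vnp1 : ℝ)
    (hunm1 : 0 < unm1) (hun : 0 < un) (hunp1 : 0 < unp1)
    (hvnm1 : 0 < vnm1) (hvn : 0 < vn) (hvnp1 : 0 < vnp1)
    (hequ : ℓn = un * (σ1 * unp1 + σ0 * un + σm1 * unm1) + κn * un)
    (heqv : ℓn = vn * (σ1 * vnp1 + σ0 * vn + σm1 * vnm1) + κn * vn) :
    (un - vn) ^ 2 ≤ 8 * (ℓn / σ0 + ((|κn| - κn) / 2) ^ 2 / σ0 ^ 2) := by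
  have hu := sq_le_of_solution hσ0 hσ1 hσm1 hunm1 hun hunp1 hequ
  have hv := sq_le_of_solution hσ0 hσ1 hσm1 hvnm1 hvn hvnp1 heqv
  have hL : 0 < ℓn / σ0 := div_pos hℓ hσ0
  rw [← div_pow]
  nlinarith [mul_pos hun hvn, sq_nonneg ((|κn| - κn) / 2 / σ0)]
end

section
/- Let n ≥ 1, ℓ_n > 0, σ_{n,0} > 0, σ_{n,1} ≥ 0, σ_{n,-1} ≥ 0, κ_n ∈ ℝ, and set σ_n := max(σ_{n,-1}, σ_{n,1}). If u_{n-1}, u_n, u_{n+1} and v_{n-1}, v_n, v_{n+1} are real numbers with u_n > 0 and v_n > 0 that both satisfy ℓ_n = y_n (σ_{n,1} y_{n+1} + σ_{n,0} y_n + σ_{n,-1} y_{n-1}) + κ_n y_n (with y = u and y = v respectively), and if moreover 2σ_n ≤ σ_{n,0} + ℓ_n/(u_n v_n), then 2|u_n − v_n| ≤ |u_{n+1} − v_{n+1}| + |u_{n-1} − v_{n-1}|. -/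
/-!
Dividing each equation by its central value and subtracting gives, for the differences
`ε = u - v`, the identity `(σ0 + ℓn / (un * vn)) εₙ = -(σ1 εₙ₊₁ + σm1 εₙ₋₁)`. Taking absolute
values bounds `(σ0 + ℓn / (un * vn)) |εₙ|` by `max σm1 σ1 * (|εₙ₊₁| + |εₙ₋₁|)`, and the
hypothesis on the maximum allows the positive factor `σ0 + ℓn / (un * vn)` to be cancelled.
-/

/-- Convexity step for the difference of two solutions: if `u` and `v` both solve the
equation at index `n ≥ 1`, with `uₙ > 0`, `vₙ > 0`, and `2σₙ ≤ σₙ₀ + ℓₙ/(uₙvₙ)` where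
`σₙ := max(σₙ₋₁, σₙ₁)`, then `2|uₙ − vₙ| ≤ |uₙ₊₁ − vₙ₊₁| + |uₙ₋₁ − vₙ₋₁|`. -/
theorem stmt16 (n : ℕ) (hn : 1 ≤ n) (ℓn σ1 σ0 σm1 κn : ℝ)
    (hℓ : 0 < ℓn) (hσ0 : 0 < σ0) (hσ1 : 0 ≤ σ1) (hσm1 : 0 ≤ σm1)
    (unm1 un unp1 vnm1 vn vnp1 : ℝ)
    (hun : 0 < un) (hvn : 0 < vn)
    (hequ : ℓn = un * (σ1 * unp1 + σ0 * un + σm1 * unm1) + κn * un)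
    (heqv : ℓn = vn * (σ1 * vnp1 + σ0 * vn + σm1 * vnm1) + κn * vn)
    (hcond : 2 * max σm1 σ1 ≤ σ0 + ℓn / (un * vn)) :
    2 * |un - vn| ≤ |unp1 - vnp1| + |unm1 - vnm1| := by
  have hC : 0 < σ0 + ℓn / (un * vn) := by positivity
  have hu : ℓn / un = σ1 * unp1 + σ0 * un + σm1 * unm1 + κn := by
    rw [div_eq_iff hun.ne']; linarith
  have hv : ℓn / vn = σ1 * vnp1 + σ0 * vn + σm1 * vnm1 + κn := by
    rw [div_eq_iff hvn.ne']; linarith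
  have hsplit : ℓn / (un * vn) * (un - vn) = ℓn / vn - ℓn / un := by
    field_simp
  have hdiff : (σ0 + ℓn / (un * vn)) * (un - vn)
      = -(σ1 * (unp1 - vnp1) + σm1 * (unm1 - vnm1)) := by
    rw [add_mul, hsplit, hu, hv]; ring
  have habs : (σ0 + ℓn / (un * vn)) * |un - vn|
      ≤ max σm1 σ1 * (|unp1 - vnp1| + |unm1 - vnm1|) := by
    calc (σ0 + ℓn / (un * vn)) * |un - vn|
        = |σ1 * (unp1 - vnp1) + σm1 * (unm1 - vnm1)| := by
          rw [← abs_of_pos hC, ← abs_mul, hdiff, abs_neg]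
      _ ≤ σ1 * |unp1 - vnp1| + σm1 * |unm1 - vnm1| := by
          refine (abs_add_le _ _).trans_eq ?_
          rw [abs_mul, abs_mul, abs_of_nonneg hσ1, abs_of_nonneg hσm1]
      _ ≤ max σm1 σ1 * |unp1 - vnp1| + max σm1 σ1 * |unm1 - vnm1| := by
          gcongr
          · exact le_max_right _ _
          · exact le_max_left _ _
      _ = _ := by ring
  -- Cancelling `σ0 + ℓn / (un * vn) > 0` rather than the maximum, which may vanish.
  refine le_of_mul_le_mul_left ?_ hC
  have hmul := mul_le_mul_of_nonneg_right hcond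
    (by positivity : 0 ≤ |unp1 - vnp1| + |unm1 - vnm1|)
  linarith
end

section
/- If a real sequence (x_n)_{n≥0} satisfies n = x_n (x_{n+1} + x_{n-1}) for all n ≥ 1, then x_{n-1} x_n = n/2 − 1/4 + (−1)^n (1/4 − x_0 x_1) for all n ≥ 1. -/
/-- If `n = xₙ(xₙ₊₁ + xₙ₋₁)` for all `n ≥ 1`, then
`xₙ₋₁ xₙ = n/2 − 1/4 + (−1)ⁿ (1/4 − x₀x₁)` for all `n ≥ 1`. -/
theorem stmt19 (x : ℕ → ℝ)
    (heq : ∀ n : ℕ, 1 ≤ n → (n : ℝ) = x n * (x (n + 1) + x (n - 1))) :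
    ∀ n : ℕ, 1 ≤ n →
      x (n - 1) * x n = (n : ℝ) / 2 - 1 / 4 + (-1 : ℝ) ^ n * (1 / 4 - x 0 * x 1) := by
  intro n hn
  induction n, hn using Nat.le_induction with
  | base => norm_num
  | succ n hn ih =>
    -- The hypothesis at `n` says `yₙ₊₁ + yₙ = n` for `yₙ = xₙ₋₁ xₙ`.
    have h := heq n hn
    rw [Nat.add_sub_cancel, pow_succ]
    push_cast
    linear_combination -h - ih
end
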